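/- Let 0 < α ≤ 1 and p = 1. Suppose λ > (3n + 2α)/n and Φ is a positive increasing function on (0,∞) satisfying Φ(2r) ≤ D·Φ(r) for all r > 0 with doubling constant 1 ≤ D < 2ⁿ. Then there exists a constant C > 0, independent of f, such that for every f ∈ L^{1,Φ}(ℝⁿ), ‖g*_{λ,α}(f)‖_{WL^{1,Φ}} ≤ C ‖f‖_{L^{1,Φ}}; that is, for every ball B(x₀,r) and every σ > 0, σ·|{x ∈ B(x₀,r) : g*_{λ,α}(f)(x) > σ}| ≤ C Φ(r) ‖f‖_{L^{1,Φ}}. -/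

import Mathlib

/-!
The operator `g*_{λ,α}` is compared with a discrete square function, to which standard
Calderón–Zygmund theory applies.

*Discretization.* Cover the upper half-space by Whitney regions
`box n j m` around the lattice points `2^j m` at height about `2^j`. On one region every average
`∫ φ_t(y - z) f(z) dz` with `φ ∈ 𝒞_α` is a bounded multiple of the average of `f` against some
member of `𝒞_α` rescaled to the point `y_{jm} = 2^j m` and the height `T_j = (n + 1) 2^j`
(`pair_rescale`), so choosing one near-extremal test function `ψ_{jm}` per region gives
`g*(f)(x)² ≤ C ∑ v_{jm}(x)² |⟨f, ψ_{jm}⟩|²` with weights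
`v_{jm}(x) = (T_j / (T_j + |x - y_{jm}|))^{n + α}` (`discretize`). The hypothesis on `λ` enters
only through `λ n ≥ 2 (n + α)`.

*Three estimates for the discrete square function.*
* In `L²`: cancellation and Hölder continuity make the `ψ_{jm}` almost orthogonal, so that Schur's
  test gives the Bessel inequality `∑ T_j^n |⟨g, ψ_{jm}⟩|² ≤ C ‖g‖₂²` (`schur_test`, `bessel`);
  moreover `∫ v_{jm} ≤ C T_j^n` (`vw_int`).
* For `δ_z` minus the uniform probability measure on `B(z, ρ)`: the `ℓ¹` sum of coefficients times
  weights has bounded integral over `{|x - z| ≥ 4ρ}` (`bad_sum`). At scales above `ρ` this is due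
  to Hölder continuity of `ψ_{jm}`, at scales below `ρ` to the decay of `v_{jm}`.
* For `δ_z` with `|z - x₀| ≥ 2r`: the integral over `B(x₀, r)` of the same sum is at most
  `C (r / |z - x₀|)^n` (`tail_sum`).

*Weak-type estimate on a ball.* For `f` on `B(x₀, 2r)` a Calderón–Zygmund decomposition at height
`σ` is used in a continuous form that needs no Whitney cubes: with `Ω` the open set where a maximal
function of `f` is large, the bad part is `∫_Ω f(z) (δ_z - |B_z|⁻¹ 1_{B_z}) dz`, where `B_z` is the
ball about `z` whose radius is a quarter of the distance from `z` to `Ωᶜ`; the good part is bounded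
by a multiple of `σ` (`cz`). Chebyshev's inequality in `L²` for the good part, and in `L¹` off `Ω`
for the bad part and for `f` off `B(x₀, 2r)`, gives (`weak_local`)
`σ |{x ∈ B(x₀, r) : g*(f) > σ}| ≤ C (∫_{B(x₀,2r)} |f| + ∫_{|z - x₀| ≥ 2r} |f| (r / |z - x₀|)^n)`.

*Morrey norms.* The first integral is at most `D Φ(r) ‖f‖`. The annulus
`2^k r ≤ |z - x₀| < 2^{k+1} r` contributes at most a multiple of `(D / 2ⁿ)^k Φ(r) ‖f‖` to the
second one, and these sum because `D < 2ⁿ` (`morrey_tail`).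
-/

open MeasureTheory Metric Set

noncomputable section

/-- `ℝⁿ` as a Euclidean space. -/
abbrev Rn (n : ℕ) := EuclideanSpace ℝ (Fin n)

/-- The family `𝒞_α` of real functions supported in the closed unit ball, with vanishing
integral, satisfying the Hölder condition `|φ x - φ x'| ≤ |x - x'|^α`. -/
def Calpha (n : ℕ) (α : ℝ) : Set (Rn n → ℝ) :=
  {φ | (∀ x : Rn n, 1 < ‖x‖ → φ x = 0) ∧ ((∫ x, φ x) = 0) ∧
    ∀ x x' : Rn n, |φ x - φ x'| ≤ ‖x - x'‖ ^ α}

/-- `A_α(f)(y,t) = sup_{φ ∈ 𝒞_α} |(f * φ_t)(y)|`, where `φ_t(x) = t⁻ⁿ φ(x/t)`. -/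
def Aalpha {n : ℕ} (α : ℝ) (f : Rn n → ℝ) (y : Rn n) (t : ℝ) : ℝ :=
  ⨆ φ ∈ Calpha n α, |∫ z, (t ^ n)⁻¹ * φ (t⁻¹ • (y - z)) * f z|

/-- The intrinsic square function `S_{α,β}` of aperture `β`. -/
def Salpha {n : ℕ} (α β : ℝ) (f : Rn n → ℝ) (x : Rn n) : ℝ :=
  Real.sqrt (∫ p in {p : Rn n × ℝ | 0 < p.2 ∧ dist x p.1 < β * p.2},
    Aalpha α f p.1 p.2 ^ 2 / p.2 ^ (n + 1))

/-- The intrinsic `g^*_λ` function. -/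
def gstarAlpha {n : ℕ} (α lam : ℝ) (f : Rn n → ℝ) (x : Rn n) : ℝ :=
  Real.sqrt (∫ p in {p : Rn n × ℝ | 0 < p.2},
    (p.2 / (p.2 + dist x p.1)) ^ (lam * n) * Aalpha α f p.1 p.2 ^ 2 / p.2 ^ (n + 1))

/-- The intrinsic Littlewood–Paley `g`-function. -/
def gAlpha {n : ℕ} (α : ℝ) (f : Rn n → ℝ) (x : Rn n) : ℝ :=
  Real.sqrt (∫ t in Ioi (0 : ℝ), Aalpha α f x t ^ 2 / t)

/-- The commutator kernel
`sup_{φ ∈ 𝒞_α} |∫ (b x - b z) φ_t (y - z) f z dz|`. -/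
def commAalpha {n : ℕ} (α : ℝ) (b f : Rn n → ℝ) (x y : Rn n) (t : ℝ) : ℝ :=
  ⨆ φ ∈ Calpha n α, |∫ z, (b x - b z) * ((t ^ n)⁻¹ * φ (t⁻¹ • (y - z))) * f z|

/-- The commutator `[b, S_α]`. -/
def commS {n : ℕ} (α : ℝ) (b f : Rn n → ℝ) (x : Rn n) : ℝ :=
  Real.sqrt (∫ p in {p : Rn n × ℝ | 0 < p.2 ∧ dist x p.1 < p.2},
    commAalpha α b f x p.1 p.2 ^ 2 / p.2 ^ (n + 1))

/-- The commutator `[b, g^*_{λ,α}]`. -/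
def commGstar {n : ℕ} (α lam : ℝ) (b f : Rn n → ℝ) (x : Rn n) : ℝ :=
  Real.sqrt (∫ p in {p : Rn n × ℝ | 0 < p.2},
    (p.2 / (p.2 + dist x p.1)) ^ (lam * n) * commAalpha α b f x p.1 p.2 ^ 2 / p.2 ^ (n + 1))

/-- The commutator `[b, g_α]`. -/
def commG {n : ℕ} (α : ℝ) (b f : Rn n → ℝ) (x : Rn n) : ℝ :=
  Real.sqrt (∫ t in Ioi (0 : ℝ), commAalpha α b f x x t ^ 2 / t)

/-- `A` is an admissible constant for `f` in the generalized Morrey space `L^{p,Φ}`: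
`∫_{B(x₀,r)} |f|^p ≤ A^p Φ(r)` for all balls.  The Morrey norm `‖f‖_{L^{p,Φ}}` is the least
such `A ≥ 0`, and `f ∈ L^{p,Φ}` iff some such `A` exists. -/
def MorreyBound {n : ℕ} (p : ℝ) (Φ : ℝ → ℝ) (f : Rn n → ℝ) (A : ℝ) : Prop :=
  ∀ (x₀ : Rn n) (r : ℝ), 0 < r → (∫ x in ball x₀ r, |f x| ^ p) ≤ A ^ p * Φ r

/-- `A` is an admissible constant for `g` in the weak space `WL^{1,Φ}`:
`σ |{x ∈ B(x₀,r) : g x > σ}| ≤ A Φ(r)` for all balls and all `σ > 0`. -/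
def WeakMorreyBound {n : ℕ} (Φ : ℝ → ℝ) (g : Rn n → ℝ) (A : ℝ) : Prop :=
  ∀ (x₀ : Rn n) (r : ℝ), 0 < r → ∀ σ : ℝ, 0 < σ →
    σ * (volume {x ∈ ball x₀ r | σ < g x}).toReal ≤ A * Φ r

/-- Average of `b` over the ball `B(x₀,r)`. -/
def ballAvg {n : ℕ} (b : Rn n → ℝ) (x₀ : Rn n) (r : ℝ) : ℝ :=
  (volume (ball x₀ r)).toReal⁻¹ * ∫ y in ball x₀ r, b y

/-- `b ∈ BMO(ℝⁿ)`. -/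
def IsBMO {n : ℕ} (b : Rn n → ℝ) : Prop :=
  LocallyIntegrable b volume ∧ ∃ K : ℝ, ∀ (x₀ : Rn n) (r : ℝ), 0 < r →
    (∫ x in ball x₀ r, |b x - ballAvg b x₀ r|) ≤ K * (volume (ball x₀ r)).toReal

/-- The Hardy–Littlewood maximal function. -/
def hlMaximal {n : ℕ} (g : Rn n → ℝ) (x : Rn n) : ℝ :=
  ⨆ (x₀ : Rn n) (r : ℝ), ⨆ (_ : 0 < r ∧ x ∈ ball x₀ r),
    (volume (ball x₀ r)).toReal⁻¹ * ∫ y in ball x₀ r, |g y|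

open scoped ENNReal NNReal

/-! ### The dyadic lattice of the upper half-space -/

/-- The `j`-th dyadic scale.  The factor `n + 1` makes the ball of centre `ypt n j m` and
radius `Tj n j` contain `B(y, t)` for every `(y, t)` in the Whitney region of index `(j, m)`. -/
def Tj (n : ℕ) (j : ℤ) : ℝ := ((n : ℝ) + 1) * (2 : ℝ) ^ j

/-- The lattice point `2^j m`. -/
def ypt (n : ℕ) (j : ℤ) (m : Fin n → ℤ) : Rn n := WithLp.toLp 2 (fun i => (2 : ℝ) ^ j * (m i : ℝ))

lemma Tj_pos (n : ℕ) (j : ℤ) : 0 < Tj n j := by unfold Tj; positivity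

/-- At most `C (R / T)^n` lattice points of scale `T ≤ R` lie in a ball of radius `R`. -/
lemma tsum_local {n : ℕ} (j : ℤ) (F : (Fin n → ℤ) → ℝ≥0∞) (z : Rn n) {R : ℝ} (hR : Tj n j ≤ R)
    (B : ℝ≥0∞) (hF : ∀ m, F m ≤ B) (h0 : ∀ m, R < dist (ypt n j m) z → F m = 0) :
    ∑' m, F m ≤ ENNReal.ofReal ((3 * (n + 1) * R / Tj n j) ^ n) * B := by
  have h2 : (0 : ℝ) < 2 ^ j := by positivity
  have hT := Tj_pos n j
  have hRp : 0 < R := lt_of_lt_of_le hT hR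
  set s : Finset (Fin n → ℤ) :=
    Fintype.piFinset (fun i => Finset.Icc ⌈(z i - R) / 2 ^ j⌉ ⌊(z i + R) / 2 ^ j⌋) with hs
  have hout : ∀ m ∉ s, F m = 0 := by
    intro m hm
    apply h0
    by_contra! hle
    apply hm
    rw [hs, Fintype.mem_piFinset]
    intro i
    have h1 : |(ypt n j m - z) i| ≤ R := by
      have := PiLp.norm_apply_le (ypt n j m - z) i
      rw [Real.norm_eq_abs, ← dist_eq_norm] at this
      exact this.trans hle
    have h3 : (ypt n j m - z) i = 2 ^ j * (m i : ℝ) - z i := rfl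
    rw [h3, abs_le] at h1
    rw [Finset.mem_Icc, Int.ceil_le, Int.le_floor, div_le_iff₀ h2, le_div_iff₀ h2]
    constructor <;> nlinarith [h1.1, h1.2]
  rw [tsum_eq_sum (s := s) hout]
  calc ∑ m ∈ s, F m ≤ ∑ m ∈ s, B := Finset.sum_le_sum (fun m _ => hF m)
    _ = (s.card : ℝ≥0∞) * B := by rw [Finset.sum_const, nsmul_eq_mul]
    _ ≤ _ := by
      gcongr
      rw [← ENNReal.ofReal_natCast]
      apply ENNReal.ofReal_le_ofReal
      rw [hs, Fintype.card_piFinset]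
      push_cast
      calc ∏ i : Fin n, ((Finset.Icc ⌈(z i - R) / 2 ^ j⌉ ⌊(z i + R) / 2 ^ j⌋).card : ℝ)
          ≤ ∏ i : Fin n, (3 * (n + 1) * R / Tj n j) := by
            apply Finset.prod_le_prod
            · intros; positivity
            · intro i _
              rw [Int.card_Icc]
              have e : 3 * ((n : ℝ) + 1) * R / Tj n j = 3 * (R / 2 ^ j) := by
                unfold Tj; field_simp
              have hR1 : 1 ≤ R / 2 ^ j := by
                rw [le_div_iff₀ h2]; unfold Tj at hR; nlinarith
              rw [e]
              have hf := Int.floor_le ((z i + R) / 2 ^ j)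
              have hc := Int.le_ceil ((z i - R) / 2 ^ j)
              have hz : (z i + R) / 2 ^ j - (z i - R) / 2 ^ j = 2 * (R / 2 ^ j) := by ring
              have : (((⌊(z i + R) / 2 ^ j⌋ + 1 - ⌈(z i - R) / 2 ^ j⌉).toNat : ℤ) : ℝ)
                  ≤ 3 * (R / 2 ^ j) := by
                rw [Int.toNat_eq_max]
                push_cast
                apply max_le <;> linarith
              exact_mod_cast this
        _ = _ := by rw [Finset.prod_const, Finset.card_univ, Fintype.card_fin]

/-- Two-sided geometric decay away from a fixed scale is summable, uniformly in that scale. -/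
lemma geo_sum (n : ℕ) (ε : ℝ) (hε : 0 < ε) : ∃ C : ℝ≥0, ∀ ρ : ℝ, 0 < ρ →
    ∑' j : ℤ, ENNReal.ofReal ((min (Tj n j / ρ) (ρ / Tj n j)) ^ ε) ≤ C := by
  have hq0 : (0:ℝ) < (1/2 : ℝ) ^ ε := by positivity
  have hq1 : (1/2 : ℝ) ^ ε < 1 := Real.rpow_lt_one (by norm_num) (by norm_num) hε
  set q : ℝ := (1/2 : ℝ) ^ ε with hq
  have hsum : Summable (fun i : ℤ => (2:ℝ) ^ ε * q ^ i.natAbs) := by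
    apply Summable.mul_left
    apply Summable.of_nat_of_neg
    · simpa using summable_geometric_of_lt_one hq0.le hq1
    · simpa using summable_geometric_of_lt_one hq0.le hq1
  refine ⟨(∑' i : ℤ, (2:ℝ) ^ ε * q ^ i.natAbs).toNNReal, fun ρ hρ => ?_⟩
  obtain ⟨k, hk1, hk2⟩ := exists_mem_Ico_zpow (x := ρ / (n+1)) (y := (2:ℝ)) (by positivity) (by norm_num)
  have hn : (0:ℝ) < n + 1 := by positivity
  rw [le_div_iff₀ hn] at hk1
  rw [div_lt_iff₀ hn] at hk2
  have key : ∀ j : ℤ, (min (Tj n j / ρ) (ρ / Tj n j)) ^ ε ≤ 2 ^ ε * q ^ (j - k).natAbs := by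
    intro j
    have hT := Tj_pos n j
    have e1 : q ^ (j - k).natAbs = ((1/2 : ℝ) ^ (j-k).natAbs) ^ ε := by
      rw [hq, ← Real.rpow_natCast, ← Real.rpow_natCast, ← Real.rpow_mul (by norm_num),
        ← Real.rpow_mul (by norm_num), mul_comm]
    rw [e1, ← Real.mul_rpow (by norm_num) (by positivity)]
    apply Real.rpow_le_rpow (by positivity) _ hε.le
    have hk0 : (0:ℝ) < 2 ^ k := by positivity
    rw [zpow_add_one₀ (by norm_num)] at hk2
    rcases le_total j k with h | h
    · apply (min_le_left _ _).trans
      have : ((1/2 : ℝ)) ^ (j-k).natAbs = 2 ^ j / 2 ^ k := by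
        rw [← zpow_sub₀ (by norm_num), ← zpow_natCast, one_div, inv_zpow', Int.natCast_natAbs,
          abs_of_nonpos (by linarith)]; simp
      rw [this, div_le_iff₀ hρ]
      unfold Tj
      have : (0:ℝ) < 2 ^ j := by positivity
      calc ((n:ℝ) + 1) * 2 ^ j = 2 * (2 ^ j / 2 ^ k) * (2^k * (n+1)) / 2 := by field_simp
        _ ≤ 2 * (2 ^ j / 2 ^ k) * ρ / 2 := by gcongr
        _ ≤ _ := by
          have : 0 ≤ 2 * ((2:ℝ) ^ j / 2 ^ k) * ρ := by positivity
          linarith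
    · apply (min_le_right _ _).trans
      have : ((1/2 : ℝ)) ^ (j-k).natAbs = 2 ^ k / 2 ^ j := by
        rw [← zpow_sub₀ (by norm_num), ← zpow_natCast, one_div, inv_zpow', Int.natCast_natAbs,
          abs_of_nonneg (by linarith)]; simp
      rw [this, div_le_iff₀ hT]
      unfold Tj
      have : (0:ℝ) < 2 ^ j := by positivity
      calc ρ ≤ 2^k * 2 * (n+1) := hk2.le
        _ = _ := by field_simp
  calc ∑' j : ℤ, ENNReal.ofReal ((min (Tj n j / ρ) (ρ / Tj n j)) ^ ε)
      ≤ ∑' j : ℤ, ENNReal.ofReal (2 ^ ε * q ^ (j - k).natAbs) :=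
        ENNReal.tsum_le_tsum fun j => ENNReal.ofReal_le_ofReal (key j)
    _ = ∑' i : ℤ, ENNReal.ofReal (2 ^ ε * q ^ i.natAbs) :=
        (Equiv.subRight k).tsum_eq (fun i : ℤ => ENNReal.ofReal ((2:ℝ) ^ ε * q ^ i.natAbs))
    _ = _ := (ENNReal.ofReal_tsum_of_nonneg (fun i => by positivity) hsum).symm

/-! ### Test functions and almost orthogonality -/

/-- `ψ` is a normalized mean-zero `α`-Hölder bump living in the closed ball of centre `y` and
radius `T`: the properties of `z ↦ φ_T (y - z)`, `φ ∈ 𝒞_α`, that the estimates use. -/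
structure IsTest {n : ℕ} (α T : ℝ) (y : Rn n) (ψ : Rn n → ℝ) : Prop where
  supp : ∀ z, T < dist y z → ψ z = 0
  bound : ∀ z, |ψ z| ≤ 2 * (T ^ n)⁻¹
  holder : ∀ z z', |ψ z - ψ z'| ≤ (T ^ n)⁻¹ * (dist z z' / T) ^ α
  mean : ∫ z, ψ z = 0

/-- The volume of the unit ball. -/
def cn (n : ℕ) : ℝ := (volume (ball (0 : Rn n) 1)).toReal

lemma cn_pos (n : ℕ) : 0 < cn n :=
  ENNReal.toReal_pos (measure_ball_pos volume _ one_pos).ne' measure_ball_lt_top.ne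

lemma vol_ball {n : ℕ} (hn : 0 < n) (x : Rn n) (r : ℝ) (hr : 0 ≤ r) :
    volume (ball x r) = ENNReal.ofReal (cn n * r ^ n) := by
  have : Nonempty (Fin n) := ⟨⟨0, hn⟩⟩
  have : Nontrivial (Rn n) := inferInstance
  rw [Measure.addHaar_ball _ _ hr, cn, mul_comm, ENNReal.ofReal_mul ENNReal.toReal_nonneg,
    ENNReal.ofReal_toReal measure_ball_lt_top.ne, finrank_euclideanSpace_fin]

lemma vol_closedBall {n : ℕ} (hn : 0 < n) (x : Rn n) (r : ℝ) (hr : 0 ≤ r) :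
    volume (closedBall x r) = ENNReal.ofReal (cn n * r ^ n) := by
  rw [← vol_ball hn x r hr, Measure.addHaar_closedBall _ _ hr, vol_ball hn x r hr, cn, mul_comm,
    ENNReal.ofReal_mul ENNReal.toReal_nonneg, ENNReal.ofReal_toReal measure_ball_lt_top.ne,
    finrank_euclideanSpace_fin]

lemma IsTest.continuous {n : ℕ} {α T : ℝ} (hα : 0 < α) {y : Rn n} {ψ : Rn n → ℝ}
    (h : IsTest α T y ψ) : Continuous ψ := by
  rw [continuous_iff_continuousAt]
  intro z
  rw [ContinuousAt, tendsto_iff_dist_tendsto_zero]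
  have h1 : Filter.Tendsto (fun w : Rn n => (T ^ n)⁻¹ * (dist w z / T) ^ α) (nhds z) (nhds 0) := by
    have : Continuous (fun w : Rn n => (T ^ n)⁻¹ * (dist w z / T) ^ α) := by
      apply continuous_const.mul
      exact Continuous.rpow_const (by fun_prop) (fun _ => Or.inr hα.le)
    have h2 := this.tendsto z
    simpa [Real.zero_rpow hα.ne'] using h2
  refine squeeze_zero (fun _ => dist_nonneg) (fun w => ?_) h1
  rw [Real.dist_eq]
  exact h.holder w z

lemma IsTest.hasCompactSupport {n : ℕ} {α T : ℝ} {y : Rn n} {ψ : Rn n → ℝ}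
    (h : IsTest α T y ψ) : HasCompactSupport ψ := by
  refine HasCompactSupport.intro (isCompact_closedBall y T) (fun z hz => h.supp z ?_)
  rw [mem_closedBall, not_le, dist_comm] at hz
  exact hz

lemma IsTest.integrable {n : ℕ} {α T : ℝ} (hα : 0 < α) {y : Rn n} {ψ : Rn n → ℝ}
    (h : IsTest α T y ψ) : Integrable ψ :=
  (h.continuous hα).integrable_of_hasCompactSupport h.hasCompactSupport

/-- Only boundedly many of the test functions of a given scale are nonzero at a given point. -/
lemma sum_abs_test {n : ℕ} {α : ℝ} (j : ℤ) (ψ : (Fin n → ℤ) → Rn n → ℝ)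
    (h : ∀ m, IsTest α (Tj n j) (ypt n j m) (ψ m)) (z : Rn n) :
    ∑' m, ‖ψ m z‖ₑ ≤ ENNReal.ofReal (2 * (3 * (n + 1)) ^ n / Tj n j ^ n) := by
  have hT := Tj_pos n j
  refine (tsum_local j (fun m => ‖ψ m z‖ₑ) z le_rfl (ENNReal.ofReal (2 * (Tj n j ^ n)⁻¹))
    (fun m => ?_) (fun m hm => ?_)).trans (le_of_eq ?_)
  · rw [Real.enorm_eq_ofReal_abs]
    exact ENNReal.ofReal_le_ofReal ((h m).bound z)
  · simp [(h m).supp z hm]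
  · rw [← ENNReal.ofReal_mul (by positivity)]
    congr 1
    field_simp

/-- Almost orthogonality: the mean value zero of the finer test function is played against the
Hölder continuity of the coarser one. -/
lemma pairing_le {n : ℕ} (hn : 0 < n) {α T₁ T₂ : ℝ} (hα : 0 < α) (hT₂ : 0 < T₂) (h12 : T₂ ≤ T₁)
    {y₁ y₂ : Rn n} {ψ₁ ψ₂ : Rn n → ℝ} (h₁ : IsTest α T₁ y₁ ψ₁) (h₂ : IsTest α T₂ y₂ ψ₂) :
    |∫ z, ψ₁ z * ψ₂ z| ≤ 2 * cn n * (T₁ ^ n)⁻¹ * (T₂ / T₁) ^ α := by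
  have hT₁ : 0 < T₁ := hT₂.trans_le h12
  have hi2 := h₂.integrable hα
  have hi12 : Integrable (fun z => ψ₁ z * ψ₂ z) :=
    ((h₁.continuous hα).mul (h₂.continuous hα)).integrable_of_hasCompactSupport
      (h₂.hasCompactSupport.mul_left)
  have e : ∫ z, ψ₁ z * ψ₂ z = ∫ z in closedBall y₂ T₂, (ψ₁ z - ψ₁ y₂) * ψ₂ z := by
    rw [setIntegral_eq_integral_of_forall_compl_eq_zero]
    · simp_rw [sub_mul]
      rw [integral_sub hi12 (hi2.const_mul _), integral_const_mul, h₂.mean]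
      simp
    · intro z hz
      rw [mem_closedBall, not_le, dist_comm] at hz
      rw [h₂.supp z hz, mul_zero]
  rw [e]
  have hb : ∀ z ∈ closedBall y₂ T₂, ‖(ψ₁ z - ψ₁ y₂) * ψ₂ z‖ ≤
      ((T₁ ^ n)⁻¹ * (T₂ / T₁) ^ α) * (2 * (T₂ ^ n)⁻¹) := by
    intro z hz
    rw [norm_mul, Real.norm_eq_abs, Real.norm_eq_abs]
    refine mul_le_mul ((h₁.holder z y₂).trans ?_) (h₂.bound z) (abs_nonneg _) (by positivity)
    rw [mem_closedBall] at hz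
    gcongr
  have := norm_setIntegral_le_of_norm_le_const (μ := volume) (by
    rw [vol_closedBall hn _ _ hT₂.le]; exact ENNReal.ofReal_lt_top) hb
  rw [Real.norm_eq_abs] at this
  refine this.trans (le_of_eq ?_)
  rw [Measure.real, vol_closedBall hn _ _ hT₂.le,
    ENNReal.toReal_ofReal (mul_nonneg (cn_pos n).le (by positivity))]
  field_simp

lemma pairing_zero {n : ℕ} {α T₁ T₂ : ℝ}
    {y₁ y₂ : Rn n} {ψ₁ ψ₂ : Rn n → ℝ} (h₁ : IsTest α T₁ y₁ ψ₁) (h₂ : IsTest α T₂ y₂ ψ₂)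
    (hd : T₁ + T₂ < dist y₁ y₂) : ∫ z, ψ₁ z * ψ₂ z = 0 := by
  rw [← integral_zero (Rn n) ℝ (μ := volume)]
  congr 1
  ext z
  by_cases h : T₁ < dist y₁ z
  · rw [h₁.supp z h, zero_mul]
  · rw [h₂.supp z, mul_zero]
    have := dist_triangle_right y₁ y₂ z
    linarith

/-- Schur's condition for the Gram matrix of a family of test functions. -/
lemma schur_test {n : ℕ} (hn : 0 < n) {α : ℝ} (hα : 0 < α) : ∃ C : ℝ≥0,
    ∀ ψ : ℤ → (Fin n → ℤ) → Rn n → ℝ, (∀ j m, IsTest α (Tj n j) (ypt n j m) (ψ j m)) →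
      ∀ (j : ℤ) (m : Fin n → ℤ),
        ∑' j', ∑' m', ENNReal.ofReal (Tj n j' ^ n * |∫ z, ψ j m z * ψ j' m' z|) ≤ C := by
  obtain ⟨C, hC⟩ := geo_sum n α hα
  refine ⟨((6 * (n + 1)) ^ n * 2 * cn n).toNNReal * C, fun ψ hψ j m => ?_⟩
  have hT := Tj_pos n j
  have hc := cn_pos n
  have key : ∀ j', ∑' m', ENNReal.ofReal (Tj n j' ^ n * |∫ z, ψ j m z * ψ j' m' z|) ≤
      ENNReal.ofReal ((6 * (n + 1)) ^ n * 2 * cn n) *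
        ENNReal.ofReal ((min (Tj n j' / Tj n j) (Tj n j / Tj n j')) ^ α) := by
    intro j'
    have hT' := Tj_pos n j'
    set M := max (Tj n j) (Tj n j') with hM
    set q := min (Tj n j' / Tj n j) (Tj n j / Tj n j') with hq
    have hM0 : 0 < M := lt_max_of_lt_left hT
    have hq0 : 0 < q := by positivity
    refine (tsum_local j' _ (ypt n j m) (R := 2 * M) ?_
      (ENNReal.ofReal (Tj n j' ^ n * (2 * cn n * (M ^ n)⁻¹ * q ^ α))) (fun m' => ?_)
      (fun m' hm' => ?_)).trans (le_of_eq ?_)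
    · have := le_max_right (Tj n j) (Tj n j'); linarith
    · apply ENNReal.ofReal_le_ofReal
      gcongr
      rcases le_total (Tj n j') (Tj n j) with h | h
      · have e1 : M = Tj n j := max_eq_left h
        have e2 : q = Tj n j' / Tj n j := min_eq_left (by
          rw [div_le_div_iff₀ hT hT']; nlinarith)
        rw [e1, e2]
        exact pairing_le hn hα hT' h (hψ j m) (hψ j' m')
      · have e1 : M = Tj n j' := max_eq_right h
        have e2 : q = Tj n j / Tj n j' := min_eq_right (by
          rw [div_le_div_iff₀ hT' hT]; nlinarith)
        rw [e1, e2]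
        simp_rw [mul_comm (ψ j m _)]
        exact pairing_le hn hα hT h (hψ j' m') (hψ j m)
    · rw [pairing_zero (hψ j m) (hψ j' m')]
      · simp
      · rw [dist_comm]
        refine lt_of_le_of_lt ?_ hm'
        have := le_max_right (Tj n j) (Tj n j')
        have := le_max_left (Tj n j) (Tj n j')
        linarith
    · rw [← ENNReal.ofReal_mul (by positivity), ← ENNReal.ofReal_mul (by positivity)]
      congr 1
      rw [show 3 * ((n : ℝ) + 1) * (2 * M) / Tj n j' = (6 * (n + 1)) * M / Tj n j' by ring,
        div_pow, mul_pow]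
      field_simp
  calc _ ≤ _ := ENNReal.tsum_le_tsum key
    _ ≤ _ := by
      rw [ENNReal.tsum_mul_left, ENNReal.coe_mul]
      gcongr
      · exact le_rfl
      · exact hC _ hT

/-- Bessel inequality from Schur's condition: expand `0 ≤ ∫ (g - F / C)²` with
`F = ∑ μᵢ ⟨g, ψᵢ⟩ ψᵢ`. -/
lemma bessel_finite {n : ℕ} {ι : Type*} (S : Finset ι) (μ : ι → ℝ) (hμ : ∀ i, 0 ≤ μ i)
    (ψ : ι → Rn n → ℝ) (g : Rn n → ℝ) (C : ℝ) (hC : 0 < C)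
    (hg : Integrable (fun z => g z ^ 2)) (hgψ : ∀ i, Integrable (fun z => g z * ψ i z))
    (hψψ : ∀ i k, Integrable (fun z => ψ i z * ψ k z))
    (hS : ∀ i ∈ S, ∑ k ∈ S, μ k * |∫ z, ψ i z * ψ k z| ≤ C) :
    ∑ i ∈ S, μ i * (∫ z, g z * ψ i z) ^ 2 ≤ C * ∫ z, g z ^ 2 := by
  set u : ι → ℝ := fun i => ∫ z, g z * ψ i z with hu
  set K : ι → ι → ℝ := fun i k => ∫ z, ψ i z * ψ k z with hK
  set I : ℝ := ∑ i ∈ S, μ i * u i ^ 2 with hI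
  have hKs : ∀ i k, K i k = K k i := fun i k => by simp only [hK, mul_comm]
  have hquad : ∑ i ∈ S, ∑ k ∈ S, (μ i * u i) * (μ k * u k) * K i k ≤ C * I := by
    have h1 : ∑ i ∈ S, ∑ k ∈ S, (μ i * u i) * (μ k * u k) * K i k ≤
        ∑ i ∈ S, ∑ k ∈ S, (μ i * u i ^ 2 * (μ k * |K i k|) / 2 +
          μ k * u k ^ 2 * (μ i * |K k i|) / 2) := by
      refine Finset.sum_le_sum fun i _ => Finset.sum_le_sum fun k _ => ?_
      rw [hKs k i]
      have h2 : u i * u k * K i k ≤ (u i ^ 2 + u k ^ 2) / 2 * |K i k| := by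
        have h3 : u i * u k * K i k ≤ |u i * u k| * |K i k| := by
          rw [← abs_mul]; exact le_abs_self _
        have h4 : |u i * u k| ≤ (u i ^ 2 + u k ^ 2) / 2 := by
          rw [abs_le]; constructor <;> nlinarith [sq_nonneg (u i + u k), sq_nonneg (u i - u k)]
        exact h3.trans (mul_le_mul_of_nonneg_right h4 (abs_nonneg _))
      have := mul_le_mul_of_nonneg_left h2 (mul_nonneg (hμ i) (hμ k))
      linarith
    have h5 : ∑ i ∈ S, ∑ k ∈ S, μ i * u i ^ 2 * (μ k * |K i k|) / 2 ≤ C * I / 2 := by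
      rw [hI, Finset.mul_sum, Finset.sum_div]
      refine Finset.sum_le_sum fun i hi => ?_
      rw [← Finset.sum_div, ← Finset.mul_sum]
      have := mul_le_mul_of_nonneg_left (hS i hi) (mul_nonneg (hμ i) (sq_nonneg (u i)))
      linarith
    refine h1.trans ?_
    simp_rw [Finset.sum_add_distrib]
    rw [Finset.sum_comm (f := fun i k => μ k * u k ^ 2 * (μ i * |K k i|) / 2)]
    linarith
  have hpt : ∀ z, (g z - C⁻¹ * ∑ i ∈ S, (μ i * u i) * ψ i z) ^ 2 =
      g z ^ 2 - 2 * C⁻¹ * ∑ i ∈ S, (μ i * u i) * (g z * ψ i z) +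
        C⁻¹ ^ 2 * ∑ i ∈ S, ∑ k ∈ S, (μ i * u i) * (μ k * u k) * (ψ i z * ψ k z) := by
    intro z
    have h1 : ∑ i ∈ S, (μ i * u i) * (g z * ψ i z) = g z * ∑ i ∈ S, (μ i * u i) * ψ i z := by
      rw [Finset.mul_sum]; exact Finset.sum_congr rfl fun i _ => by ring
    have h2 : ∑ i ∈ S, ∑ k ∈ S, (μ i * u i) * (μ k * u k) * (ψ i z * ψ k z) =
        (∑ i ∈ S, (μ i * u i) * ψ i z) ^ 2 := by
      rw [sq, Finset.sum_mul_sum]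
      exact Finset.sum_congr rfl fun i _ => Finset.sum_congr rfl fun k _ => by ring
    rw [h1, h2]; ring
  have hexpand : ∫ z, (g z - C⁻¹ * ∑ i ∈ S, (μ i * u i) * ψ i z) ^ 2 =
      (∫ z, g z ^ 2) - 2 * C⁻¹ * I +
        C⁻¹ ^ 2 * ∑ i ∈ S, ∑ k ∈ S, (μ i * u i) * (μ k * u k) * K i k := by
    simp_rw [hpt]
    have i1 : Integrable (fun z => ∑ i ∈ S, (μ i * u i) * (g z * ψ i z)) :=
      integrable_finsetSum _ fun i _ => (hgψ i).const_mul _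
    have i2 : Integrable (fun z =>
        ∑ i ∈ S, ∑ k ∈ S, (μ i * u i) * (μ k * u k) * (ψ i z * ψ k z)) :=
      integrable_finsetSum _ fun i _ => integrable_finsetSum _ fun k _ => (hψψ i k).const_mul _
    have i3 : Integrable (fun z => g z ^ 2 - 2 * C⁻¹ * ∑ i ∈ S, (μ i * u i) * (g z * ψ i z)) :=
      hg.sub (i1.const_mul _)
    rw [integral_add i3 (i2.const_mul _), integral_sub hg (i1.const_mul _),
      integral_const_mul, integral_const_mul, integral_finsetSum _ fun i _ => (hgψ i).const_mul _,
      integral_finsetSum _ fun i _ => integrable_finsetSum _ fun k _ => (hψψ i k).const_mul _]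
    congr 1
    · congr 2
      refine Finset.sum_congr rfl fun i _ => ?_
      rw [integral_const_mul]; ring
    · congr 1
      refine Finset.sum_congr rfl fun i _ => ?_
      rw [integral_finsetSum _ fun k _ => (hψψ i k).const_mul _]
      refine Finset.sum_congr rfl fun k _ => ?_
      rw [integral_const_mul]
  have hnn : 0 ≤ ∫ z, (g z - C⁻¹ * ∑ i ∈ S, (μ i * u i) * ψ i z) ^ 2 :=
    integral_nonneg fun z => sq_nonneg _
  rw [hexpand] at hnn
  have h6 : C⁻¹ ^ 2 * ∑ i ∈ S, ∑ k ∈ S, (μ i * u i) * (μ k * u k) * K i k ≤ C⁻¹ ^ 2 * (C * I) :=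
    mul_le_mul_of_nonneg_left hquad (by positivity)
  have h7 : C⁻¹ ^ 2 * (C * I) = C⁻¹ * I := by field_simp
  have h8 : C⁻¹ * I ≤ ∫ z, g z ^ 2 := by linarith
  rwa [inv_mul_le_iff₀ hC] at h8

/-- The `L²` bound: test-function coefficients form a Bessel sequence. -/
lemma bessel {n : ℕ} (hn : 0 < n) {α : ℝ} (hα : 0 < α) : ∃ C : ℝ≥0,
    ∀ ψ : ℤ → (Fin n → ℤ) → Rn n → ℝ, (∀ j m, IsTest α (Tj n j) (ypt n j m) (ψ j m)) →
      ∀ g : Rn n → ℝ, Integrable g → Integrable (fun z => g z ^ 2) →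
        ∑' j, ∑' m, ENNReal.ofReal (Tj n j ^ n) * ‖∫ z, g z * ψ j m z‖ₑ ^ 2 ≤
          C * ENNReal.ofReal (∫ z, g z ^ 2) := by
  obtain ⟨C, hC⟩ := schur_test hn hα
  refine ⟨C + 1, fun ψ hψ g hg hg2 => ?_⟩
  rw [← ENNReal.tsum_prod, ENNReal.tsum_eq_iSup_sum]
  refine iSup_le fun S => ?_
  have hcont : ∀ j m, Continuous (ψ j m) := fun j m => (hψ j m).continuous hα
  have hb := bessel_finite S (fun p : ℤ × (Fin n → ℤ) => Tj n p.1 ^ n)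
    (fun p => (pow_pos (Tj_pos n p.1) n).le) (fun p => ψ p.1 p.2) g (C + 1) (by positivity) hg2
    (fun p => hg.mul_bdd (c := 2 * (Tj n p.1 ^ n)⁻¹) (hcont _ _).aestronglyMeasurable
      (Filter.Eventually.of_forall fun z => (hψ p.1 p.2).bound z))
    (fun p q => ((hcont _ _).mul (hcont _ _)).integrable_of_hasCompactSupport
      (hψ q.1 q.2).hasCompactSupport.mul_left) ?_
  · calc ∑ p ∈ S, ENNReal.ofReal (Tj n p.1 ^ n) * ‖∫ z, g z * ψ p.1 p.2 z‖ₑ ^ 2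
        = ∑ p ∈ S, ENNReal.ofReal (Tj n p.1 ^ n * (∫ z, g z * ψ p.1 p.2 z) ^ 2) := by
          refine Finset.sum_congr rfl fun p _ => ?_
          rw [ENNReal.ofReal_mul (pow_pos (Tj_pos n p.1) n).le, Real.enorm_eq_ofReal_abs,
            ← ENNReal.ofReal_pow (abs_nonneg _), sq_abs]
      _ = ENNReal.ofReal (∑ p ∈ S, Tj n p.1 ^ n * (∫ z, g z * ψ p.1 p.2 z) ^ 2) :=
          (ENNReal.ofReal_sum_of_nonneg fun p _ =>
            mul_nonneg (pow_pos (Tj_pos n p.1) n).le (sq_nonneg _)).symm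
      _ ≤ ENNReal.ofReal ((C + 1) * ∫ z, g z ^ 2) := ENNReal.ofReal_le_ofReal hb
      _ = _ := by
          rw [ENNReal.ofReal_mul (by positivity)]
          congr 1
          rw [ENNReal.ofReal_add (by positivity) (by norm_num)]
          simp
  · intro p _
    have h1 := hC ψ hψ p.1 p.2
    rw [← ENNReal.tsum_prod (f := fun j' m' =>
      ENNReal.ofReal (Tj n j' ^ n * |∫ z, ψ p.1 p.2 z * ψ j' m' z|))] at h1
    have h2 := (ENNReal.sum_le_tsum (f := fun q : ℤ × (Fin n → ℤ) =>
      ENNReal.ofReal (Tj n q.1 ^ n * |∫ z, ψ p.1 p.2 z * ψ q.1 q.2 z|)) S).trans h1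
    rw [← ENNReal.ofReal_sum_of_nonneg (fun q _ => by have := Tj_pos n q.1; positivity),
      ← ENNReal.ofReal_coe_nnreal, ENNReal.ofReal_le_ofReal_iff (by positivity)] at h2
    linarith

/-! ### Integrals of the weights -/

/-- A power of the `g^*` weight attached to the lattice point of index `(j, m)`; the exponent
`n + α` is what is left of `λ n / 2`. -/
def vw {n : ℕ} (α : ℝ) (j : ℤ) (m : Fin n → ℤ) (x : Rn n) : ℝ :=
  (Tj n j / (Tj n j + dist x (ypt n j m))) ^ ((n : ℝ) + α)

lemma kernel_base_nonneg {n : ℕ} {T : ℝ} (hT : 0 < T) (x y : Rn n) : 0 ≤ T / (T + dist x y) :=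
  div_nonneg hT.le (add_nonneg hT.le dist_nonneg)

lemma kernel_base_le_one {n : ℕ} {T : ℝ} (hT : 0 < T) (x y : Rn n) : T / (T + dist x y) ≤ 1 := by
  rw [div_le_one (add_pos_of_pos_of_nonneg hT dist_nonneg)]
  linarith [dist_nonneg (x := x) (y := y)]

lemma kernel_continuous {n : ℕ} {T s : ℝ} (hT : 0 < T) (hs : 0 ≤ s) (y : Rn n) :
    Continuous (fun x : Rn n => (T / (T + dist x y)) ^ s) := by
  refine Continuous.rpow_const ?_ (fun _ => Or.inr hs)
  refine continuous_const.div (by fun_prop) (fun x => ?_)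
  exact (add_pos_of_pos_of_nonneg hT dist_nonneg).ne'

lemma vw_nonneg {n : ℕ} (α : ℝ) (j : ℤ) (m : Fin n → ℤ) (x : Rn n) : 0 ≤ vw α j m x :=
  Real.rpow_nonneg (kernel_base_nonneg (Tj_pos n j) _ _) _

lemma vw_le_one {n : ℕ} {α : ℝ} (hα : 0 < α) (j : ℤ) (m : Fin n → ℤ) (x : Rn n) :
    vw α j m x ≤ 1 :=
  Real.rpow_le_one (kernel_base_nonneg (Tj_pos n j) _ _) (kernel_base_le_one (Tj_pos n j) _ _)
    (by positivity)

lemma vw_continuous {n : ℕ} {α : ℝ} (hα : 0 < α) (j : ℤ) (m : Fin n → ℤ) :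
    Continuous (vw (n := n) α j m) :=
  kernel_continuous (Tj_pos n j) (by positivity) _

lemma kernel_int (n : ℕ) {s : ℝ} (hs : (n : ℝ) < s) : ∃ C : ℝ≥0, ∀ (T : ℝ) (y : Rn n), 0 < T →
    ∫⁻ x, ENNReal.ofReal ((T / (T + dist x y)) ^ s) ≤ C * ENNReal.ofReal (T ^ n) := by
  have hi : Integrable (fun x : Rn n => (1 + ‖x‖) ^ (-s)) :=
    integrable_one_add_norm (by rwa [finrank_euclideanSpace_fin])
  refine ⟨(∫ x : Rn n, (1 + ‖x‖) ^ (-s)).toNNReal, fun T y hT => ?_⟩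
  have e : ∀ x : Rn n, (T / (T + dist x y)) ^ s = (1 + ‖T⁻¹ • (x - y)‖) ^ (-s) := by
    intro x
    rw [norm_smul, norm_inv, Real.norm_eq_abs, abs_of_pos hT, ← dist_eq_norm, Real.rpow_neg
      (by positivity), ← Real.inv_rpow (by positivity)]
    congr 1
    have : 0 < T + dist x y := add_pos_of_pos_of_nonneg hT dist_nonneg
    field_simp
  simp_rw [e]
  rw [lintegral_sub_right_eq_self (fun x : Rn n => ENNReal.ofReal ((1 + ‖T⁻¹ • x‖) ^ (-s))) y,
    ← ofReal_integral_eq_lintegral_ofReal (hi.comp_smul (inv_ne_zero hT.ne'))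
      (Filter.Eventually.of_forall fun x => by positivity),
    Measure.integral_comp_smul volume (fun x : Rn n => (1 + ‖x‖) ^ (-s)),
    finrank_euclideanSpace_fin, smul_eq_mul, ENNReal.ofReal_mul (abs_nonneg _), mul_comm]
  refine le_of_eq ?_
  congr 2
  rw [inv_pow, inv_inv, abs_of_pos (by positivity)]

lemma vw_int (n : ℕ) {α : ℝ} (hα : 0 < α) : ∃ C : ℝ≥0, ∀ (j : ℤ) (m : Fin n → ℤ),
    ∫⁻ x, ENNReal.ofReal (vw α j m x) ≤ C * ENNReal.ofReal (Tj n j ^ n) := by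
  obtain ⟨C, hC⟩ := kernel_int n (s := n + α) (by linarith)
  exact ⟨C, fun j m => hC _ _ (Tj_pos n j)⟩

lemma vw_int_far (n : ℕ) {α : ℝ} (hα : 0 < α) : ∃ C : ℝ≥0, ∀ (j : ℤ) (m : Fin n → ℤ) (ρ : ℝ),
    0 < ρ → ∫⁻ x in {x | ρ ≤ dist x (ypt n j m)}, ENNReal.ofReal (vw α j m x) ≤
      C * ENNReal.ofReal (Tj n j ^ n * (Tj n j / ρ) ^ (α / 2)) := by
  obtain ⟨C, hC⟩ := kernel_int n (s := n + α / 2) (by linarith)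
  refine ⟨C, fun j m ρ hρ => ?_⟩
  have hT := Tj_pos n j
  have hms : MeasurableSet {x | ρ ≤ dist x (ypt n j m)} :=
    (isClosed_le continuous_const (by fun_prop)).measurableSet
  have hpt : ∀ x ∈ {x | ρ ≤ dist x (ypt n j m)}, ENNReal.ofReal (vw α j m x) ≤
      ENNReal.ofReal ((Tj n j / ρ) ^ (α / 2)) *
        ENNReal.ofReal ((Tj n j / (Tj n j + dist x (ypt n j m))) ^ ((n : ℝ) + α / 2)) := by
    intro x hx
    rw [← ENNReal.ofReal_mul (by positivity)]
    apply ENNReal.ofReal_le_ofReal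
    have hb := kernel_base_nonneg hT x (ypt n j m)
    rw [vw, show (n : ℝ) + α = α / 2 + (n + α / 2) by ring,
      Real.rpow_add_of_nonneg hb (by positivity) (by positivity)]
    gcongr
    have : ρ ≤ dist x (ypt n j m) := hx
    linarith
  calc _ ≤ ∫⁻ x in {x | ρ ≤ dist x (ypt n j m)}, ENNReal.ofReal ((Tj n j / ρ) ^ (α / 2)) *
        ENNReal.ofReal ((Tj n j / (Tj n j + dist x (ypt n j m))) ^ ((n : ℝ) + α / 2)) :=
        setLIntegral_mono' hms hpt
    _ ≤ ∫⁻ x, ENNReal.ofReal ((Tj n j / ρ) ^ (α / 2)) *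
        ENNReal.ofReal ((Tj n j / (Tj n j + dist x (ypt n j m))) ^ ((n : ℝ) + α / 2)) :=
        setLIntegral_le_lintegral _ _
    _ = ENNReal.ofReal ((Tj n j / ρ) ^ (α / 2)) * ∫⁻ x,
        ENNReal.ofReal ((Tj n j / (Tj n j + dist x (ypt n j m))) ^ ((n : ℝ) + α / 2)) :=
        lintegral_const_mul' _ _ ENNReal.ofReal_ne_top
    _ ≤ ENNReal.ofReal ((Tj n j / ρ) ^ (α / 2)) * (C * ENNReal.ofReal (Tj n j ^ n)) := by
        gcongr; exact hC _ _ hT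
    _ = _ := by rw [ENNReal.ofReal_mul (by positivity)]; ring

/-! ### Point masses minus their averages, and far point masses -/

/-- The mean of `ψ` over `B(z, ρ)`. -/
def avg {n : ℕ} (ψ : Rn n → ℝ) (z : Rn n) (ρ : ℝ) : ℝ := (cn n * ρ ^ n)⁻¹ * ∫ w in ball z ρ, ψ w

lemma sub_avg_le {n : ℕ} (hn : 0 < n) {ψ : Rn n → ℝ} (hψ : Integrable ψ) {z : Rn n} {ρ B : ℝ}
    (hρ : 0 < ρ) (hB : ∀ w ∈ ball z ρ, |ψ z - ψ w| ≤ B) : |ψ z - avg ψ z ρ| ≤ B := by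
  have hv : volume.real (ball z ρ) = cn n * ρ ^ n := by
    rw [Measure.real, vol_ball hn _ _ hρ.le,
      ENNReal.toReal_ofReal (mul_nonneg (cn_pos n).le (by positivity))]
  have hpos : 0 < cn n * ρ ^ n := mul_pos (cn_pos n) (by positivity)
  have hcst : IntegrableOn (fun _ : Rn n => ψ z) (ball z ρ) volume :=
    integrableOn_const measure_ball_lt_top.ne
  have e : ψ z - avg ψ z ρ = (cn n * ρ ^ n)⁻¹ * ∫ w in ball z ρ, (ψ z - ψ w) := by
    rw [integral_sub hcst hψ.integrableOn, setIntegral_const,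
      hv, avg, smul_eq_mul, mul_sub, inv_mul_cancel_left₀ hpos.ne']
  have := norm_setIntegral_le_of_norm_le_const (μ := volume) (f := fun w => ψ z - ψ w)
    (measure_ball_lt_top (x := z) (r := ρ)) hB
  rw [hv, Real.norm_eq_abs] at this
  rw [e, abs_mul, abs_of_pos (inv_pos.2 hpos), inv_mul_le_iff₀ hpos]
  linarith

lemma avg_enorm_le {n : ℕ} (ψ : Rn n → ℝ) (z : Rn n) (ρ : ℝ) (hρ : 0 < ρ) :
    ‖avg ψ z ρ‖ₑ ≤ ENNReal.ofReal (cn n * ρ ^ n)⁻¹ * ∫⁻ w in ball z ρ, ‖ψ w‖ₑ := by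
  have hpos : 0 < cn n * ρ ^ n := mul_pos (cn_pos n) (by positivity)
  rw [avg, enorm_mul, Real.enorm_of_nonneg (inv_pos.2 hpos).le]
  gcongr
  exact enorm_integral_le_lintegral_enorm _

/-- The bad-part estimate for a single point mass at `z` spread over `B(z, ρ)`: the total mass, away
from `z`, of its (`ℓ¹`) square function is bounded. -/
lemma bad_sum {n : ℕ} (hn : 0 < n) {α : ℝ} (hα : 0 < α) : ∃ C : ℝ≥0,
    ∀ ψ : ℤ → (Fin n → ℤ) → Rn n → ℝ, (∀ j m, IsTest α (Tj n j) (ypt n j m) (ψ j m)) →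
      ∀ (z : Rn n) (ρ : ℝ), 0 < ρ →
        ∑' j, ∑' m, ‖ψ j m z - avg (ψ j m) z ρ‖ₑ *
          ∫⁻ x in {x | 4 * ρ ≤ dist x z}, ENNReal.ofReal (vw α j m x) ≤ C := by
  obtain ⟨C₀, hC₀⟩ := geo_sum n (α / 2) (by linarith)
  obtain ⟨C₁, hC₁⟩ := vw_int n hα
  obtain ⟨C₂, hC₂⟩ := vw_int_far n hα
  refine ⟨(C₁ * ((6 * (n + 1)) ^ n : ℝ≥0) + C₂ * (2 * (2 * (3 * (n + 1)) ^ n) : ℝ≥0)) * C₀,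
    fun ψ hψ z ρ hρ => ?_⟩
  have hc := cn_pos n
  have key : ∀ j, ∑' m, ‖ψ j m z - avg (ψ j m) z ρ‖ₑ *
      ∫⁻ x in {x | 4 * ρ ≤ dist x z}, ENNReal.ofReal (vw α j m x) ≤
      (C₁ * ((6 * (n + 1)) ^ n : ℝ≥0) + C₂ * (2 * (2 * (3 * (n + 1)) ^ n) : ℝ≥0) : ℝ≥0) *
        ENNReal.ofReal ((min (Tj n j / ρ) (ρ / Tj n j)) ^ (α / 2)) := by
    intro j
    have hT := Tj_pos n j
    rcases le_total ρ (Tj n j) with h | h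
    -- coarse scales: Hölder continuity of the test functions
    · have e : min (Tj n j / ρ) (ρ / Tj n j) = ρ / Tj n j := min_eq_right (by
        rw [div_le_div_iff₀ hT hρ]; nlinarith)
      have hq : ρ / Tj n j ≤ 1 := (div_le_one hT).2 h
      rw [e]
      refine (tsum_local j _ z (R := 2 * Tj n j) (by linarith)
        (ENNReal.ofReal ((Tj n j ^ n)⁻¹ * (ρ / Tj n j) ^ (α / 2)) *
          (C₁ * ENNReal.ofReal (Tj n j ^ n))) (fun m => ?_) (fun m hm => ?_)).trans ?_
      · gcongr
        · rw [Real.enorm_eq_ofReal_abs]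
          apply ENNReal.ofReal_le_ofReal
          refine sub_avg_le hn ((hψ j m).integrable hα) hρ (fun w hw => ?_)
          refine ((hψ j m).holder z w).trans ?_
          gcongr
          calc (dist z w / Tj n j) ^ α ≤ (ρ / Tj n j) ^ α := by
                rw [mem_ball'] at hw; gcongr
            _ ≤ _ := Real.rpow_le_rpow_of_exponent_ge (by positivity) hq (by linarith)
        · exact (setLIntegral_le_lintegral _ _).trans (hC₁ j m)
      · have : |ψ j m z - avg (ψ j m) z ρ| ≤ 0 := by
          refine sub_avg_le hn ((hψ j m).integrable hα) hρ (fun w hw => ?_)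
          rw [mem_ball'] at hw
          have := dist_triangle_right (ypt n j m) z w
          rw [(hψ j m).supp z (by linarith), (hψ j m).supp w (by linarith)]
          simp
        rw [abs_nonpos_iff.1 this]
        simp
      · have hc1 : ((C₁ * ((6 * (n + 1)) ^ n : ℝ≥0) : ℝ≥0) : ℝ≥0∞) =
            C₁ * ENNReal.ofReal ((6 * (n + 1)) ^ n) := by
          rw [ENNReal.coe_mul]
          congr 1
          rw [← ENNReal.ofReal_coe_nnreal]
          congr 1
        calc _ = C₁ * ENNReal.ofReal ((6 * (n + 1)) ^ n) *
              ENNReal.ofReal ((ρ / Tj n j) ^ (α / 2)) := by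
              rw [show ∀ a b c : ℝ≥0∞, a * (b * (C₁ * c)) = C₁ * (a * b * c) from
                  fun a b c => by ring, mul_assoc (C₁ : ℝ≥0∞),
                ← ENNReal.ofReal_mul (by positivity), ← ENNReal.ofReal_mul (by positivity),
                ← ENNReal.ofReal_mul (by positivity)]
              congr 2
              rw [show 3 * ((n : ℝ) + 1) * (2 * Tj n j) / Tj n j = 6 * (n + 1) by
                field_simp; ring]
              field_simp
          _ ≤ _ := by
              rw [← hc1]
              gcongr
              exact le_self_add
    -- fine scales: decay of the weights; only lattice points within `2ρ` of `z` contribute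
    · have e : min (Tj n j / ρ) (ρ / Tj n j) = Tj n j / ρ := min_eq_left (by
        rw [div_le_div_iff₀ hρ hT]; nlinarith)
      rw [e]
      have h1 : ∀ m, ‖ψ j m z - avg (ψ j m) z ρ‖ₑ *
          ∫⁻ x in {x | 4 * ρ ≤ dist x z}, ENNReal.ofReal (vw α j m x) ≤
          ‖ψ j m z - avg (ψ j m) z ρ‖ₑ *
            (C₂ * ENNReal.ofReal (Tj n j ^ n * (Tj n j / ρ) ^ (α / 2))) := by
        intro m
        by_cases hd : dist (ypt n j m) z ≤ 2 * ρ
        · gcongr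
          refine (lintegral_mono_set ?_).trans (hC₂ j m ρ hρ)
          intro x (hx : 4 * ρ ≤ dist x z)
          have := dist_triangle x (ypt n j m) z
          change ρ ≤ dist x (ypt n j m)
          linarith
        · have : |ψ j m z - avg (ψ j m) z ρ| ≤ 0 := by
            refine sub_avg_le hn ((hψ j m).integrable hα) hρ (fun w hw => ?_)
            rw [mem_ball'] at hw
            have := dist_triangle_right (ypt n j m) z w
            rw [(hψ j m).supp z (by linarith), (hψ j m).supp w (by linarith)]
            simp
          rw [abs_nonpos_iff.1 this]
          simp
      have hs := sum_abs_test j (ψ j) (hψ j)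
      set Q : ℝ := 2 * (3 * (n + 1)) ^ n / Tj n j ^ n with hQ
      have h2 : ∑' m, ‖ψ j m z - avg (ψ j m) z ρ‖ₑ ≤ ENNReal.ofReal (2 * Q) := by
        calc ∑' m, ‖ψ j m z - avg (ψ j m) z ρ‖ₑ
            ≤ ∑' m, (‖ψ j m z‖ₑ +
                ENNReal.ofReal (cn n * ρ ^ n)⁻¹ * ∫⁻ w in ball z ρ, ‖ψ j m w‖ₑ) := by
              refine ENNReal.tsum_le_tsum fun m => (enorm_sub_le).trans ?_
              gcongr
              exact avg_enorm_le _ _ _ hρ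
          _ = ∑' m, ‖ψ j m z‖ₑ + ENNReal.ofReal (cn n * ρ ^ n)⁻¹ *
                ∫⁻ w in ball z ρ, ∑' m, ‖ψ j m w‖ₑ := by
              rw [ENNReal.tsum_add, ENNReal.tsum_mul_left, lintegral_tsum]
              exact fun m => ((hψ j m).continuous hα).enorm.aemeasurable
          _ ≤ ENNReal.ofReal Q + ENNReal.ofReal (cn n * ρ ^ n)⁻¹ *
                ∫⁻ w in ball z ρ, ENNReal.ofReal Q := by
              gcongr
              · exact hs z
              · exact hs _
          _ = _ := by
              rw [setLIntegral_const, vol_ball hn _ _ hρ.le, ← ENNReal.ofReal_mul (by positivity),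
                ← ENNReal.ofReal_mul (by positivity), ← ENNReal.ofReal_add (by positivity)
                (by positivity)]
              congr 1
              field_simp
              ring
      have hc1 : ((C₂ * (2 * (2 * (3 * (n + 1)) ^ n) : ℝ≥0) : ℝ≥0) : ℝ≥0∞) =
          C₂ * ENNReal.ofReal (2 * (2 * (3 * (n + 1)) ^ n)) := by
        rw [ENNReal.coe_mul]
        congr 1
        rw [← ENNReal.ofReal_coe_nnreal]
        congr 1
      calc _ ≤ _ := ENNReal.tsum_le_tsum h1
        _ ≤ ENNReal.ofReal (2 * Q) *
            (C₂ * ENNReal.ofReal (Tj n j ^ n * (Tj n j / ρ) ^ (α / 2))) := by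
            rw [ENNReal.tsum_mul_right]; gcongr
        _ = C₂ * ENNReal.ofReal (2 * (2 * (3 * (n + 1)) ^ n)) *
            ENNReal.ofReal ((Tj n j / ρ) ^ (α / 2)) := by
            rw [mul_left_comm, mul_assoc, ← ENNReal.ofReal_mul (by positivity),
              ← ENNReal.ofReal_mul (by positivity)]
            congr 2
            rw [hQ]; field_simp
        _ ≤ _ := by
            rw [← hc1]
            gcongr
            exact le_add_self
  calc _ ≤ _ := ENNReal.tsum_le_tsum key
    _ ≤ _ := by
      rw [ENNReal.tsum_mul_left, ENNReal.coe_mul]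
      gcongr
      exact hC₀ _ hρ

/-- The tail estimate for a point mass at `z`, far from the ball `B(x₀, r)`. -/
lemma tail_sum {n : ℕ} (hn : 0 < n) {α : ℝ} (hα : 0 < α) (hα1 : α ≤ 1) : ∃ C : ℝ≥0,
    ∀ ψ : ℤ → (Fin n → ℤ) → Rn n → ℝ, (∀ j m, IsTest α (Tj n j) (ypt n j m) (ψ j m)) →
      ∀ (x₀ z : Rn n) (r : ℝ), 0 < r → 2 * r ≤ dist z x₀ →
        ∑' j, ∑' m, ‖ψ j m z‖ₑ * ∫⁻ x in ball x₀ r, ENNReal.ofReal (vw α j m x) ≤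
          C * ENNReal.ofReal ((r / dist z x₀) ^ n) := by
  obtain ⟨C₀, hC₀⟩ := geo_sum n α hα
  have hc := cn_pos n
  refine ⟨(2 * (3 * (n + 1)) ^ n * cn n * (2 : ℝ) ^ ((n : ℝ) + α)).toNNReal * C₀,
    fun ψ hψ x₀ z r hr hz => ?_⟩
  set R := dist z x₀ with hR
  have hR0 : 0 < R := by linarith
  have key : ∀ j, ∑' m, ‖ψ j m z‖ₑ * ∫⁻ x in ball x₀ r, ENNReal.ofReal (vw α j m x) ≤
      ENNReal.ofReal (2 * (3 * (n + 1)) ^ n * cn n * (2 : ℝ) ^ ((n : ℝ) + α)) *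
        ENNReal.ofReal ((r / R) ^ n) *
        ENNReal.ofReal ((min (Tj n j / R) (R / Tj n j)) ^ α) := by
    intro j
    have hT := Tj_pos n j
    set V : ℝ := (2 : ℝ) ^ ((n : ℝ) + α) * ((Tj n j / R) ^ n *
      (min (Tj n j / R) (R / Tj n j)) ^ α) with hV
    have hV0 : 0 ≤ V := by positivity
    have hvV : ∀ m x, x ∈ ball x₀ r → dist (ypt n j m) z ≤ Tj n j → vw α j m x ≤ V := by
      intro m x hx hm
      rw [mem_ball] at hx
      rcases le_total (Tj n j) R with h | h
      · have e : min (Tj n j / R) (R / Tj n j) = Tj n j / R := min_eq_left (by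
          rw [div_le_div_iff₀ hR0 hT]; nlinarith)
        rw [hV, e, ← Real.rpow_natCast, ← Real.rpow_add (by positivity),
          ← Real.mul_rpow (by norm_num) (by positivity), vw]
        apply Real.rpow_le_rpow (kernel_base_nonneg hT _ _) _ (by positivity)
        rw [div_le_iff₀ (add_pos_of_pos_of_nonneg hT dist_nonneg)]
        have h1 := dist_triangle4 z (ypt n j m) x x₀
        rw [dist_comm z (ypt n j m), dist_comm (ypt n j m) x] at h1
        have h2 : R / 2 ≤ Tj n j + dist x (ypt n j m) := by linarith
        calc Tj n j = 2 * (Tj n j / R) * (R / 2) := by field_simp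
          _ ≤ _ := by gcongr
      · have e : min (Tj n j / R) (R / Tj n j) = R / Tj n j := min_eq_right (by
          rw [div_le_div_iff₀ hT hR0]; nlinarith)
        refine (vw_le_one hα j m x).trans ?_
        rw [hV, e]
        have h1 : 1 ≤ Tj n j / R := (one_le_div hR0).2 h
        have h2 : (1 : ℝ) ≤ 2 ^ ((n : ℝ) + α) := Real.one_le_rpow (by norm_num) (by positivity)
        have h3 : (1 : ℝ) ≤ (Tj n j / R) ^ n * (R / Tj n j) ^ α := by
          rw [← inv_div (Tj n j) R, Real.inv_rpow (by positivity), ← div_eq_mul_inv,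
            one_le_div (by positivity), ← Real.rpow_natCast]
          apply Real.rpow_le_rpow_of_exponent_le h1
          have : (1 : ℝ) ≤ n := by exact_mod_cast hn
          linarith
        nlinarith
    have h1 : ∀ m, ‖ψ j m z‖ₑ * ∫⁻ x in ball x₀ r, ENNReal.ofReal (vw α j m x) ≤
        ‖ψ j m z‖ₑ * ENNReal.ofReal (V * (cn n * r ^ n)) := by
      intro m
      by_cases hm : dist (ypt n j m) z ≤ Tj n j
      · gcongr
        calc _ ≤ ∫⁻ x in ball x₀ r, ENNReal.ofReal V :=
              setLIntegral_mono' measurableSet_ball fun x hx =>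
                ENNReal.ofReal_le_ofReal (hvV m x hx hm)
          _ = _ := by rw [setLIntegral_const, vol_ball hn _ _ hr.le, ← ENNReal.ofReal_mul hV0]
      · rw [(hψ j m).supp z (not_le.1 hm)]; simp
    calc _ ≤ _ := ENNReal.tsum_le_tsum h1
      _ ≤ ENNReal.ofReal (2 * (3 * (n + 1)) ^ n / Tj n j ^ n) *
          ENNReal.ofReal (V * (cn n * r ^ n)) := by
          rw [ENNReal.tsum_mul_right]; gcongr; exact sum_abs_test j (ψ j) (hψ j) z
      _ = _ := by
          rw [← ENNReal.ofReal_mul (by positivity), ← ENNReal.ofReal_mul (by positivity),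
            ← ENNReal.ofReal_mul (by positivity), hV]
          congr 1
          simp only [div_pow]
          field_simp
  calc _ ≤ _ := ENNReal.tsum_le_tsum key
    _ ≤ _ := by
      rw [ENNReal.tsum_mul_left, ENNReal.coe_mul]
      calc _ ≤ ENNReal.ofReal (2 * (3 * (n + 1)) ^ n * cn n * (2 : ℝ) ^ ((n : ℝ) + α)) *
            ENNReal.ofReal ((r / R) ^ n) * C₀ := by gcongr; exact hC₀ _ hR0
        _ = _ := by rw [mul_right_comm]; rfl

/-! ### A Calderón–Zygmund decomposition -/

/-- The set where an uncentred maximal function of `f` exceeds `σ`. -/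
def bigSet {n : ℕ} (f : Rn n → ℝ) (σ : ℝ) : Set (Rn n) :=
  {w | ∃ z s, 0 < s ∧ dist w z < s ∧
    ENNReal.ofReal (σ * s ^ n) < ∫⁻ u in closedBall z s, ‖f u‖ₑ}

lemma bigSet_isOpen {n : ℕ} (f : Rn n → ℝ) (σ : ℝ) : IsOpen (bigSet f σ) := by
  have : bigSet f σ = ⋃ z, ⋃ s, ⋃ (_ : 0 < s ∧
      ENNReal.ofReal (σ * s ^ n) < ∫⁻ u in closedBall z s, ‖f u‖ₑ), ball z s := by
    ext w
    simp only [bigSet, mem_ofPred_eq, mem_iUnion, mem_ball, exists_prop]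
    constructor
    · rintro ⟨z, s, h1, h2, h3⟩; exact ⟨z, s, ⟨h1, h3⟩, h2⟩
    · rintro ⟨z, s, ⟨h1, h3⟩, h2⟩; exact ⟨z, s, h1, h2, h3⟩
  rw [this]
  exact isOpen_iUnion fun _ => isOpen_iUnion fun _ => isOpen_iUnion fun _ => isOpen_ball

lemma lintegral_le_of_notMem_bigSet {n : ℕ} {f : Rn n → ℝ} {σ : ℝ} {w z : Rn n} {s : ℝ}
    (hw : w ∉ bigSet f σ) (hs : dist w z < s) :
    ∫⁻ u in closedBall z s, ‖f u‖ₑ ≤ ENNReal.ofReal (σ * s ^ n) := by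
  by_contra! h
  exact hw ⟨z, s, dist_nonneg.trans_lt hs, hs, h⟩

/-- The weak type `(1,1)` bound for the maximal function, by Vitali's covering lemma. -/
lemma volume_bigSet_le {n : ℕ} (hn : 0 < n) {f : Rn n → ℝ} (hf : Integrable f) {σ : ℝ}
    (hσ : 0 < σ) :
    volume (bigSet f σ) ≤ ENNReal.ofReal (cn n * 5 ^ n / σ) * ∫⁻ u, ‖f u‖ₑ := by
  have hc := cn_pos n
  have hfin : ∫⁻ u, ‖f u‖ₑ < ∞ := hf.2
  set t : Set (Rn n × ℝ) := {p | 0 < p.2 ∧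
    ENNReal.ofReal (σ * p.2 ^ n) < ∫⁻ u in closedBall p.1 p.2, ‖f u‖ₑ} with ht
  set I := ∫⁻ u, ‖f u‖ₑ with hI
  have hR : ∀ p ∈ t, p.2 ≤ max 1 (I.toReal / σ) := by
    intro p hp
    by_contra! h
    have h1 : 1 < p.2 := (le_max_left _ _).trans_lt h
    have h2 : I.toReal / σ < p.2 := (le_max_right _ _).trans_lt h
    have h3 : p.2 ≤ p.2 ^ n := le_self_pow₀ h1.le hn.ne'
    have h4 : ENNReal.ofReal (σ * p.2 ^ n) < I := hp.2.trans_le (setLIntegral_le_lintegral _ _)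
    rw [ENNReal.ofReal_lt_iff_lt_toReal (by positivity) hfin.ne] at h4
    rw [div_lt_iff₀ hσ] at h2
    nlinarith
  obtain ⟨u, hut, hdis, hcov⟩ := Vitali.exists_disjoint_subfamily_covering_enlargement_closedBall
    t (fun p => p.1) (fun p => p.2) _ hR 5 (by norm_num)
  have hcount : u.Countable := by
    refine hdis.countable_of_nonempty_interior (fun p hp => ?_)
    have h0 := (hut hp).1
    exact ⟨p.1, ball_subset_interior_closedBall (mem_ball_self h0)⟩
  have hsub : bigSet f σ ⊆ ⋃ p ∈ u, closedBall p.1 (5 * p.2) := by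
    rintro w ⟨z, s, h1, h2, h3⟩
    obtain ⟨b, hb, hb'⟩ := hcov (z, s) ⟨h1, h3⟩
    exact mem_biUnion hb (hb' (mem_closedBall.2 h2.le))
  have := hcount.to_subtype
  calc volume (bigSet f σ) ≤ ∑' p : u, volume (closedBall p.1.1 (5 * p.1.2)) := by
        refine (measure_mono hsub).trans ?_
        exact measure_biUnion_le _ hcount _
    _ ≤ ∑' p : u, ENNReal.ofReal (cn n * 5 ^ n / σ) * ∫⁻ x in closedBall p.1.1 p.1.2, ‖f x‖ₑ := by
        refine ENNReal.tsum_le_tsum (fun p => ?_)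
        have hp := hut p.2
        rw [vol_closedBall hn _ _ (by linarith [hp.1])]
        calc ENNReal.ofReal (cn n * (5 * p.1.2) ^ n)
            = ENNReal.ofReal (cn n * 5 ^ n / σ) * ENNReal.ofReal (σ * p.1.2 ^ n) := by
              rw [← ENNReal.ofReal_mul (by positivity)]
              congr 1
              rw [mul_pow]
              field_simp
          _ ≤ _ := by gcongr; exact hp.2.le
    _ = ENNReal.ofReal (cn n * 5 ^ n / σ) * ∫⁻ x in ⋃ p ∈ u, closedBall p.1 p.2, ‖f x‖ₑ := by
        rw [ENNReal.tsum_mul_left, lintegral_biUnion hcount (fun _ _ => measurableSet_closedBall) hdis]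
    _ ≤ _ := by gcongr; exact setLIntegral_le_lintegral _ _

/-- A quarter of the distance to the complement of `Ω`. -/
def rad {n : ℕ} (Ω : Set (Rn n)) (z : Rn n) : ℝ := infDist z Ωᶜ / 4

/-- Density at `x` of the normalized volume of the ball of centre `z` and radius `rad Ω z`;
it vanishes for `z ∉ Ω`, where the radius is `0`. -/
def ker {n : ℕ} (Ω : Set (Rn n)) (z x : Rn n) : ℝ :=
  (ball z (rad Ω z)).indicator (fun _ => (cn n * rad Ω z ^ n)⁻¹) x

lemma rad_nonneg {n : ℕ} (Ω : Set (Rn n)) (z : Rn n) : 0 ≤ rad Ω z :=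
  div_nonneg infDist_nonneg (by norm_num)

lemma ker_nonneg {n : ℕ} (Ω : Set (Rn n)) (z x : Rn n) : 0 ≤ ker Ω z x :=
  indicator_nonneg (fun _ _ => inv_nonneg.2 (mul_nonneg (cn_pos n).le
    (pow_nonneg (rad_nonneg _ _) _))) _

lemma rad_continuous {n : ℕ} (Ω : Set (Rn n)) : Continuous (rad Ω) :=
  (continuous_infDist_pt _).div_const _

lemma ker_measurable {n : ℕ} (Ω : Set (Rn n)) :
    Measurable (fun p : Rn n × Rn n => ker Ω p.1 p.2) := by
  have : (fun p : Rn n × Rn n => ker Ω p.1 p.2) =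
      {p : Rn n × Rn n | dist p.2 p.1 < rad Ω p.1}.indicator
        (fun p => (cn n * rad Ω p.1 ^ n)⁻¹) := by
    ext p
    simp only [ker, Set.indicator, mem_ball, mem_ofPred_eq]
  rw [this]
  have hr : Measurable (fun p : Rn n × Rn n => rad Ω p.1) :=
    ((rad_continuous Ω).comp continuous_fst).measurable
  refine Measurable.indicator (by fun_prop) (measurableSet_lt (by fun_prop) hr)

lemma ker_lintegral_le {n : ℕ} (hn : 0 < n) (Ω : Set (Rn n)) (z : Rn n) :
    ∫⁻ x, ‖ker Ω z x‖ₑ ≤ 1 := by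
  have h0 := rad_nonneg Ω z
  have hc := cn_pos n
  have : ∀ x, ‖ker Ω z x‖ₑ = (ball z (rad Ω z)).indicator
      (fun _ => ENNReal.ofReal (cn n * rad Ω z ^ n)⁻¹) x := by
    intro x
    rw [ker, enorm_indicator_eq_indicator_enorm]
    congr 1
    ext
    rw [Real.enorm_eq_ofReal (by positivity)]
  simp_rw [this]
  rw [lintegral_indicator_const measurableSet_ball, vol_ball hn _ _ h0,
    ← ENNReal.ofReal_mul (by positivity)]
  rw [← ENNReal.ofReal_one]
  apply ENNReal.ofReal_le_ofReal
  rcases h0.eq_or_lt with h | h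
  · rw [← h]; simp [hn.ne']
  · rw [inv_mul_cancel₀ (by positivity)]

lemma ker_integral {n : ℕ} (Ω : Set (Rn n)) (z : Rn n) (ψ : Rn n → ℝ) :
    ∫ x, ker Ω z x * ψ x = avg ψ z (rad Ω z) := by
  rw [avg, ← integral_const_mul, ← integral_indicator measurableSet_ball]
  congr 1
  ext x
  simp only [ker, Set.indicator]
  split_ifs <;> simp

lemma rad_pos {n : ℕ} {Ω : Set (Rn n)} (hΩ : IsOpen Ω) (hne : Ωᶜ.Nonempty) {z : Rn n}
    (hz : z ∈ Ω) : 0 < rad Ω z := by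
  have := (hΩ.isClosed_compl.notMem_iff_infDist_pos hne).1 (not_not.2 hz : z ∉ Ωᶜ)
  unfold rad; positivity

lemma rad_le {n : ℕ} {Ω : Set (Rn n)} (z : Rn n) {x : Rn n} (hx : x ∉ Ω) :
    4 * rad Ω z ≤ dist x z := by
  have := infDist_le_dist_of_mem (x := z) (show x ∈ Ωᶜ from hx)
  rw [dist_comm] at this
  unfold rad; linarith

lemma ker_eq_zero {n : ℕ} {Ω : Set (Rn n)} (z : Rn n) {x : Rn n} (hx : x ∉ Ω) :
    ker Ω z x = 0 := by
  have h1 := rad_le z hx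
  have h2 := rad_nonneg Ω z
  rw [ker, indicator_of_notMem]
  rw [mem_ball, not_lt]; linarith

/-- The averaged part of the good function is bounded by a multiple of `σ`. -/
lemma ker_pointwise {n : ℕ} {f : Rn n → ℝ} {σ : ℝ} (hσ : 0 < σ)
    (hne : (bigSet f σ)ᶜ.Nonempty) (x : Rn n) :
    ∫⁻ z, ‖f z‖ₑ * ‖ker (bigSet f σ) z x‖ₑ ≤ ENNReal.ofReal (10 ^ n / cn n * σ) := by
  set Ω := bigSet f σ with hΩ
  have hc := cn_pos n
  by_cases hx : x ∈ Ω
  swap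
  · simp [ker_eq_zero _ hx]
  set d := infDist x Ωᶜ with hd
  have hd0 : 0 < d :=
    ((bigSet_isOpen f σ).isClosed_compl.notMem_iff_infDist_pos hne).1 (not_not.2 hx)
  obtain ⟨w, hw, hwd⟩ := (infDist_lt_iff (r := 2 * d) hne).1 (by linarith : infDist x Ωᶜ < 2 * d)
  have hb : ∀ z, ‖f z‖ₑ * ‖ker Ω z x‖ₑ ≤ (closedBall x (2 * d)).indicator
      (fun z => ENNReal.ofReal (cn n * (d / 5) ^ n)⁻¹ * ‖f z‖ₑ) z := by
    intro z
    by_cases h : x ∈ ball z (rad Ω z)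
    · have h1 : infDist x Ωᶜ ≤ infDist z Ωᶜ + dist x z := infDist_le_infDist_add_dist
      have h2 : infDist z Ωᶜ ≤ infDist x Ωᶜ + dist z x := infDist_le_infDist_add_dist
      rw [dist_comm z x] at h2
      rw [mem_ball] at h
      have h3 : infDist z Ωᶜ = 4 * rad Ω z := by unfold rad; ring
      have h4 : d / 5 ≤ rad Ω z := by linarith
      rw [indicator_of_mem (by rw [mem_closedBall, dist_comm]; linarith), mul_comm]
      gcongr
      rw [ker, indicator_of_mem (mem_ball.2 h),
        Real.enorm_eq_ofReal (by have := rad_nonneg Ω z; positivity)]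
      apply ENNReal.ofReal_le_ofReal
      gcongr
    · rw [ker, indicator_of_notMem h]
      simp
  calc _ ≤ _ := lintegral_mono hb
    _ = ENNReal.ofReal (cn n * (d / 5) ^ n)⁻¹ * ∫⁻ z in closedBall x (2 * d), ‖f z‖ₑ := by
        rw [lintegral_indicator measurableSet_closedBall, lintegral_const_mul' _ _ ENNReal.ofReal_ne_top]
    _ ≤ ENNReal.ofReal (cn n * (d / 5) ^ n)⁻¹ * ENNReal.ofReal (σ * (2 * d) ^ n) := by
        gcongr
        exact lintegral_le_of_notMem_bigSet hw (by rwa [dist_comm])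
    _ = _ := by
        rw [← ENNReal.ofReal_mul (by positivity)]
        congr 1
        have : (10 : ℝ) ^ n = 5 ^ n * 2 ^ n := by rw [← mul_pow]; norm_num
        rw [this, mul_pow, div_pow]
        field_simp

/-- Off the big set the function is at most a multiple of `σ`, by Lebesgue differentiation. -/
lemma ae_le_of_notMem_bigSet {n : ℕ} (hn : 0 < n) {f : Rn n → ℝ} (hf : Integrable f) {σ : ℝ}
    (hσ : 0 < σ) : ∀ᵐ x, x ∉ bigSet f σ → |f x| ≤ σ / cn n := by
  have hc := cn_pos n
  filter_upwards [IsUnifLocDoublingMeasure.ae_tendsto_average volume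
    hf.norm.locallyIntegrable 1] with x hx hxΩ
  have h1 := hx (ι := ℝ) (l := nhdsWithin 0 (Ioi 0)) (fun _ => x) id Filter.tendsto_id (by
    filter_upwards [self_mem_nhdsWithin] with s hs
    exact mem_closedBall_self (by rw [one_mul]; exact (mem_Ioi.1 hs).le))
  refine le_of_tendsto h1 ?_
  filter_upwards [self_mem_nhdsWithin] with s hs
  have hs : 0 < s := hs
  have h2 : ∫⁻ u in closedBall x s, ‖f u‖ₑ ≤ ENNReal.ofReal (σ * s ^ n) :=
    lintegral_le_of_notMem_bigSet hxΩ (by rwa [dist_self])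
  rw [setAverage_eq, Measure.real, id, vol_closedBall hn _ _ hs.le,
    ENNReal.toReal_ofReal (by positivity), smul_eq_mul, integral_norm_eq_lintegral_enorm
    hf.aestronglyMeasurable.restrict]
  have h3 := ENNReal.toReal_le_of_le_ofReal (by positivity) h2
  calc _ ≤ (cn n * s ^ n)⁻¹ * (σ * s ^ n) := by gcongr
    _ = _ := by field_simp

/-- Calderón–Zygmund decomposition at height `σ`, in the continuous form in which the bad part is
`∫_Ω f(z) (δ_z - |B_z|⁻¹ 1_{B_z}) dz` for balls `B_z` of radius comparable to the distance from
`z` to the complement of `Ω`. -/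
lemma cz {n : ℕ} (hn : 0 < n) : ∃ C : ℝ≥0, ∀ f : Rn n → ℝ, Integrable f → ∀ σ : ℝ, 0 < σ →
    ∃ (Ω : Set (Rn n)) (ρ : Rn n → ℝ) (g : Rn n → ℝ), MeasurableSet Ω ∧
      ENNReal.ofReal σ * volume Ω ≤ C * ∫⁻ u, ‖f u‖ₑ ∧
      (∀ z ∈ Ω, 0 < ρ z) ∧ (∀ z ∈ Ω, ∀ x, x ∉ Ω → 4 * ρ z ≤ dist x z) ∧
      Integrable g ∧ Integrable (fun x => g x ^ 2) ∧
      ENNReal.ofReal (∫ x, g x ^ 2) ≤ C * ENNReal.ofReal σ * ∫⁻ u, ‖f u‖ₑ ∧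
      ∀ ψ : Rn n → ℝ, Continuous ψ → HasCompactSupport ψ →
        ‖(∫ z, f z * ψ z) - ∫ z, g z * ψ z‖ₑ ≤
          ∫⁻ z in Ω, ‖f z‖ₑ * ‖ψ z - avg ψ z (ρ z)‖ₑ := by
  have hc := cn_pos n
  refine ⟨(cn n * 5 ^ n).toNNReal + 2 * (1 / cn n + 10 ^ n / cn n).toNNReal, fun f hf σ hσ => ?_⟩
  set I := ∫⁻ u, ‖f u‖ₑ with hI
  have hfin : I < ∞ := hf.2
  set Ω := bigSet f σ with hΩ
  have hΩo : IsOpen Ω := bigSet_isOpen f σ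
  have hvol := volume_bigSet_le hn hf hσ
  have hne : Ωᶜ.Nonempty := by
    rw [nonempty_compl]
    intro h
    have : Nonempty (Fin n) := ⟨⟨0, hn⟩⟩
    have : NoncompactSpace (Rn n) := NormedSpace.noncompactSpace ℝ (Rn n)
    have h1 : volume (univ : Set (Rn n)) = ∞ := measure_univ_of_isAddLeftInvariant _
    rw [← hΩ, h, h1] at hvol
    exact (ENNReal.mul_lt_top ENNReal.ofReal_lt_top hfin).not_ge hvol
  set k : Rn n → Rn n → ℝ := ker Ω with hk
  have hjm : AEStronglyMeasurable (fun p : Rn n × Rn n => f p.1 * k p.1 p.2)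
      (volume.prod volume) :=
    hf.aestronglyMeasurable.comp_fst.mul (ker_measurable Ω).aestronglyMeasurable
  have hjl : ∫⁻ p : Rn n × Rn n, ‖f p.1 * k p.1 p.2‖ₑ ∂(volume.prod volume) ≤ I := by
    rw [lintegral_prod _ hjm.enorm]
    refine lintegral_mono (fun z => ?_)
    simp_rw [enorm_mul]
    rw [lintegral_const_mul' _ _ enorm_ne_top]
    calc _ ≤ ‖f z‖ₑ * 1 := by gcongr; exact ker_lintegral_le hn Ω z
      _ = _ := mul_one _
  have hj : Integrable (fun p : Rn n × Rn n => f p.1 * k p.1 p.2) (volume.prod volume) :=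
    ⟨hjm, hjl.trans_lt hfin⟩
  set h : Rn n → ℝ := fun x => ∫ z, f z * k z x with hh
  have hhi : Integrable h := hj.integral_prod_right
  have hhb : ∀ x, ‖h x‖ₑ ≤ ∫⁻ z, ‖f z‖ₑ * ‖k z x‖ₑ := fun x => by
    refine (enorm_integral_le_lintegral_enorm _).trans (le_of_eq ?_)
    simp_rw [enorm_mul]
  have hhl : ∫⁻ x, ‖h x‖ₑ ≤ I := by
    refine (lintegral_mono hhb).trans (le_trans (le_of_eq ?_) hjl)
    rw [lintegral_prod_symm _ hjm.enorm]
    simp_rw [enorm_mul]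
  set M := (1 / cn n + 10 ^ n / cn n) * σ with hM
  have hM0 : 0 ≤ M := by positivity
  set g : Rn n → ℝ := fun x => Ωᶜ.indicator f x + h x with hg
  have hfi : Integrable (Ωᶜ.indicator f) := hf.indicator hΩo.measurableSet.compl
  have hgi : Integrable g := hfi.add hhi
  have hgl : ∫⁻ x, ‖g x‖ₑ ≤ 2 * I := by
    calc ∫⁻ x, ‖g x‖ₑ ≤ ∫⁻ x, (‖f x‖ₑ + ‖h x‖ₑ) := by
          refine lintegral_mono (fun x => (enorm_add_le _ _).trans ?_)
          gcongr
          exact enorm_indicator_le_enorm_self _ _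
      _ = I + ∫⁻ x, ‖h x‖ₑ := lintegral_add_left' hf.aestronglyMeasurable.enorm _
      _ ≤ I + I := by gcongr
      _ = _ := (two_mul _).symm
  have hgb : ∀ᵐ x, |g x| ≤ M := by
    filter_upwards [ae_le_of_notMem_bigSet hn hf hσ] with x hx
    refine (abs_add_le _ _).trans ?_
    rw [hM, add_mul]
    refine add_le_add ?_ ?_
    · by_cases hxΩ : x ∈ Ω
      · rw [indicator_of_notMem (not_not.2 hxΩ), abs_zero]; positivity
      · rw [indicator_of_mem hxΩ]
        refine (hx hxΩ).trans (le_of_eq ?_)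
        ring
    · have := (hhb x).trans (ker_pointwise hσ hne x)
      rw [Real.enorm_eq_ofReal_abs] at this
      exact (ENNReal.ofReal_le_ofReal_iff (by positivity)).1 this
  have hg2 : Integrable (fun x => g x ^ 2) := by
    refine (hgi.norm.const_mul M).mono' (hgi.aestronglyMeasurable.pow 2) ?_
    filter_upwards [hgb] with x hx
    rw [norm_pow, sq, Real.norm_eq_abs]
    gcongr
  refine ⟨Ω, rad Ω, g, hΩo.measurableSet, ?_,
    fun z hz => rad_pos hΩo hne hz, fun z _ x hx => rad_le z hx, hgi, hg2, ?_, ?_⟩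
  · calc ENNReal.ofReal σ * volume Ω
        ≤ ENNReal.ofReal σ * (ENNReal.ofReal (cn n * 5 ^ n / σ) * I) := by gcongr
      _ = ENNReal.ofReal (cn n * 5 ^ n) * I := by
        rw [← mul_assoc, ← ENNReal.ofReal_mul hσ.le, mul_div_cancel₀ _ hσ.ne']
      _ ≤ _ := by
        gcongr
        rw [ENNReal.coe_add]
        exact le_self_add
  · calc ENNReal.ofReal (∫ x, g x ^ 2) = ∫⁻ x, ‖g x ^ 2‖ₑ := by
          rw [ofReal_integral_eq_lintegral_ofReal hg2 (ae_of_all _ fun x => sq_nonneg _)]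
          refine lintegral_congr (fun x => ?_)
          rw [Real.enorm_eq_ofReal (sq_nonneg _)]
      _ ≤ ∫⁻ x, ENNReal.ofReal M * ‖g x‖ₑ := by
          refine lintegral_mono_ae ?_
          filter_upwards [hgb] with x hx
          rw [sq, enorm_mul]
          gcongr
          rw [Real.enorm_eq_ofReal_abs]
          exact ENNReal.ofReal_le_ofReal hx
      _ ≤ ENNReal.ofReal M * (2 * I) := by
          rw [lintegral_const_mul' _ _ ENNReal.ofReal_ne_top]
          gcongr
      _ = (2 * (1 / cn n + 10 ^ n / cn n).toNNReal : ℝ≥0) * ENNReal.ofReal σ * I := by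
          rw [hM, ENNReal.ofReal_mul (by positivity), ENNReal.coe_mul]
          simp only [ENNReal.ofReal]
          push_cast
          ring
      _ ≤ _ := by
          gcongr
          exact le_add_self
  · intro ψ hψ hψc
    obtain ⟨B, hB⟩ := hψc.exists_bound_of_continuous hψ
    have hfψ : Integrable (fun z => f z * ψ z) :=
      hf.mul_bdd hψ.aestronglyMeasurable (ae_of_all _ hB)
    have hcψ : Integrable (fun z => Ωᶜ.indicator f z * ψ z) :=
      hfi.mul_bdd hψ.aestronglyMeasurable (ae_of_all _ hB)
    have hhψ : Integrable (fun z => h z * ψ z) :=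
      hhi.mul_bdd hψ.aestronglyMeasurable (ae_of_all _ hB)
    have hjψ : Integrable (fun p : Rn n × Rn n => f p.1 * k p.1 p.2 * ψ p.2)
        (volume.prod volume) :=
      hj.mul_bdd (hψ.comp continuous_snd).aestronglyMeasurable (ae_of_all _ fun p => hB p.2)
    have e0 : ∀ z, ∫ x, f z * k z x * ψ x = f z * avg ψ z (rad Ω z) := fun z => by
      simp_rw [mul_assoc]
      rw [integral_const_mul, ker_integral]
    have hia : Integrable (fun z => f z * avg ψ z (rad Ω z)) := by
      have := hjψ.integral_prod_left
      simpa only [e0] using this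
    have e1 : ∫ x, h x * ψ x = ∫ z, f z * avg ψ z (rad Ω z) := by
      have := integral_integral_swap (f := fun z x => f z * k z x * ψ x) hjψ
      simp_rw [e0] at this
      rw [this]
      refine integral_congr_ae (ae_of_all _ fun x => ?_)
      simp only [hh]
      rw [integral_mul_const]
    have e2 : (∫ z, f z * ψ z) - ∫ z, g z * ψ z =
        ∫ z in Ω, f z * (ψ z - avg ψ z (rad Ω z)) := by
      simp only [hg, add_mul]
      rw [integral_add hcψ hhψ, e1, ← sub_sub, ← integral_sub hfψ hcψ,
        ← integral_sub (by exact hfψ.sub hcψ) hia, ← integral_indicator hΩo.measurableSet]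
      refine integral_congr_ae (ae_of_all _ fun z => ?_)
      by_cases hz : z ∈ Ω
      · simp [hz]; ring
      · have : rad Ω z = 0 := by
          rw [rad, infDist_zero_of_mem hz, zero_div]
        simp [hz, this, avg]
    rw [e2]
    refine (enorm_integral_le_lintegral_enorm _).trans (le_of_eq ?_)
    simp_rw [enorm_mul]

/-! ### Discretization of the square function -/

lemma Calpha_bound {n : ℕ} (hn : 0 < n) {α : ℝ} (hα1 : α ≤ 1) {φ : Rn n → ℝ}
    (hφ : φ ∈ Calpha n α) (x : Rn n) : |φ x| ≤ 2 := by
  have : Nonempty (Fin n) := ⟨⟨0, hn⟩⟩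
  obtain ⟨e, he⟩ := exists_norm_eq (Rn n) (c := 2) (by norm_num)
  have key : ∀ e : Rn n, ‖e‖ = 2 → 1 < ‖x + e‖ → |φ x| ≤ 2 := by
    intro e he h
    have h1 := hφ.2.2 x (x + e)
    rw [hφ.1 _ h, sub_zero, sub_add_cancel_left, norm_neg, he] at h1
    refine h1.trans ?_
    calc (2 : ℝ) ^ α ≤ 2 ^ (1 : ℝ) := Real.rpow_le_rpow_of_exponent_le (by norm_num) hα1
      _ = 2 := Real.rpow_one 2
  by_cases h : 1 < ‖x + e‖
  · exact key e he h
  · refine key (-e) (by rwa [norm_neg]) ?_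
    have h1 : (2 : ℝ) * 2 ≤ ‖x + e‖ + ‖x + -e‖ := by
      have h2 : (2 : ℝ) • e = (x + e) - (x + -e) := by rw [two_smul]; abel
      have h3 := norm_sub_le (x + e) (x + -e)
      rw [← h2, norm_smul, he] at h3
      simpa using h3
    linarith

lemma Calpha_isTest {n : ℕ} (hn : 0 < n) {α : ℝ} (hα1 : α ≤ 1) {φ : Rn n → ℝ}
    (hφ : φ ∈ Calpha n α) {T : ℝ} (hT : 0 < T) (y : Rn n) :
    IsTest α T y (fun z => (T ^ n)⁻¹ * φ (T⁻¹ • (y - z))) := by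
  refine ⟨fun z hz => ?_, fun z => ?_, fun z z' => ?_, ?_⟩
  · rw [hφ.1, mul_zero]
    rw [norm_smul, norm_inv, Real.norm_of_nonneg hT.le, ← dist_eq_norm, inv_mul_eq_div,
      one_lt_div hT]
    exact hz
  · rw [abs_mul, abs_of_pos (by positivity), mul_comm]
    gcongr
    exact Calpha_bound hn hα1 hφ _
  · rw [← mul_sub, abs_mul, abs_of_pos (by positivity)]
    gcongr
    refine (hφ.2.2 _ _).trans (le_of_eq ?_)
    rw [← smul_sub, norm_smul, norm_inv, Real.norm_of_nonneg hT.le, sub_sub_sub_cancel_left,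
      ← dist_eq_norm, inv_mul_eq_div, dist_comm]
  · rw [integral_const_mul, integral_sub_left_eq_self (fun w => φ (T⁻¹ • w)) volume y,
      Measure.integral_comp_smul, hφ.2.1, smul_zero, mul_zero]

/-- The pairing of `f` with the dilate of `φ` to scale `t`, centred at `y`. -/
def pair {n : ℕ} (f φ : Rn n → ℝ) (y : Rn n) (t : ℝ) : ℝ :=
  ∫ z, (t ^ n)⁻¹ * φ (t⁻¹ • (y - z)) * f z

/-- A test function at `(y, t)` is a multiple of a test function at any `(y', T)` whose ball
contains the ball of `(y, t)`. -/
lemma pair_rescale {n : ℕ} {α : ℝ} (f : Rn n → ℝ) {φ : Rn n → ℝ}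
    (hφ : φ ∈ Calpha n α) {y y' : Rn n} {t T : ℝ} (ht : 0 < t) (hT : t + dist y y' ≤ T) :
    ∃ φ' ∈ Calpha n α, pair f φ y t = (T / t) ^ n * (T / t) ^ α * pair f φ' y' T := by
  have hT0 : 0 < T := by have := dist_nonneg (x := y) (y := y'); linarith
  refine ⟨fun w => (t / T) ^ α * φ (t⁻¹ • (y - y' + T • w)), ⟨fun w hw => ?_, ?_, fun w w' => ?_⟩,
    ?_⟩
  · simp only
    rw [hφ.1, mul_zero]
    rw [norm_smul, norm_inv, Real.norm_of_nonneg ht.le, inv_mul_eq_div, one_lt_div ht]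
    have h1 : ‖T • w‖ ≤ ‖y - y' + T • w‖ + ‖y - y'‖ := by
      have := norm_sub_le (y - y' + T • w) (y - y')
      rwa [add_sub_cancel_left] at this
    rw [norm_smul, Real.norm_of_nonneg hT0.le, ← dist_eq_norm] at h1
    have h2 : T * 1 < T * ‖w‖ := by gcongr
    linarith
  · rw [integral_const_mul]
    have h1 : ∫ w, φ (t⁻¹ • (y - y' + T • w)) =
        ∫ w, (fun v => φ (t⁻¹ • (y - y' + v))) (T • w) := rfl
    rw [h1, Measure.integral_comp_smul volume (fun v => φ (t⁻¹ • (y - y' + v))),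
      integral_add_left_eq_self (fun v => φ (t⁻¹ • v)),
      Measure.integral_comp_smul, hφ.2.1]
    simp
  · rw [← mul_sub, abs_mul, abs_of_pos (by positivity)]
    calc _ ≤ (t / T) ^ α * ‖t⁻¹ • (y - y' + T • w) - t⁻¹ • (y - y' + T • w')‖ ^ α := by
          gcongr
          exact hφ.2.2 _ _
      _ = _ := by
        rw [← smul_sub, add_sub_add_left_eq_sub, ← smul_sub, norm_smul, norm_smul, norm_inv,
          Real.norm_of_nonneg ht.le, Real.norm_of_nonneg hT0.le,
          ← Real.mul_rpow (by positivity) (by positivity)]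
        congr 1
        field_simp
  · rw [pair, pair, ← integral_const_mul]
    congr 1
    ext z
    have e1 : y - y' + T • T⁻¹ • (y' - z) = y - z := by
      rw [smul_smul, mul_inv_cancel₀ hT0.ne', one_smul]; abel
    simp only [e1]
    have e2 : (T / t) ^ α * (t / T) ^ α = 1 := by
      rw [← Real.mul_rpow (by positivity) (by positivity), div_mul_div_cancel₀ ht.ne',
        div_self hT0.ne', Real.one_rpow]
    calc (t ^ n)⁻¹ * φ (t⁻¹ • (y - z)) * f z
        = (t ^ n)⁻¹ * φ (t⁻¹ • (y - z)) * f z * ((T / t) ^ α * (t / T) ^ α) := by rw [e2, mul_one]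
      _ = _ := by rw [div_pow]; field_simp

/-- The supremum over the class `𝒞_α` is attained up to a factor `2`. -/
lemma exists_almost_max {n : ℕ} (hn : 0 < n) {α : ℝ} (hα1 : α ≤ 1) {f : Rn n → ℝ}
    (hf : LocallyIntegrable f) (y : Rn n) {T : ℝ} (hT : 0 < T) :
    ∃ φ ∈ Calpha n α, ∀ φ' ∈ Calpha n α, |pair f φ' y T| ≤ 2 * |pair f φ y T| := by
  have hz : (0 : Rn n → ℝ) ∈ Calpha n α :=
    ⟨fun _ _ => rfl, by simp, fun _ _ => by simp; positivity⟩
  set S : Set ℝ := (fun φ => |pair f φ y T|) '' Calpha n α with hS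
  have hb : BddAbove S := by
    refine ⟨∫ z in closedBall y T, 2 * (T ^ n)⁻¹ * |f z|, ?_⟩
    rintro _ ⟨φ, hφ, rfl⟩
    have ht := Calpha_isTest hn hα1 hφ hT y
    have e : pair f φ y T = ∫ z in closedBall y T, (T ^ n)⁻¹ * φ (T⁻¹ • (y - z)) * f z := by
      rw [pair, setIntegral_eq_integral_of_forall_compl_eq_zero]
      intro z hz
      rw [mem_closedBall, not_le, dist_comm] at hz
      rw [ht.supp z hz, zero_mul]
    have hfi : IntegrableOn f (closedBall y T) := hf.integrableOn_isCompact (isCompact_closedBall y T)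
    simp only [e]
    rw [← Real.norm_eq_abs]
    refine norm_integral_le_of_norm_le (hfi.norm.const_mul _) (ae_of_all _ fun z => ?_)
    rw [norm_mul, Real.norm_eq_abs]
    gcongr
    · exact ht.bound z
    · exact le_rfl
  have hne : S.Nonempty := ⟨_, 0, hz, rfl⟩
  by_cases h0 : sSup S ≤ 0
  · refine ⟨0, hz, fun φ' hφ' => ?_⟩
    have := le_csSup hb (mem_image_of_mem (fun φ => |pair f φ y T|) hφ')
    have h2 := abs_nonneg (pair f 0 y T)
    linarith
  · push Not at h0
    obtain ⟨_, ⟨φ, hφ, rfl⟩, h1⟩ := exists_lt_of_lt_csSup hne (by linarith : sSup S / 2 < sSup S)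
    refine ⟨φ, hφ, fun φ' hφ' => ?_⟩
    have := le_csSup hb (mem_image_of_mem (fun φ => |pair f φ y T|) hφ')
    linarith

/-- The dyadic Whitney regions used to discretize the upper half space. -/
def box (n : ℕ) (j : ℤ) (m : Fin n → ℤ) : Set (Rn n × ℝ) :=
  closedBall (ypt n j m) (n * (2 : ℝ) ^ j) ×ˢ Icc ((2 : ℝ) ^ j / 2) ((2 : ℝ) ^ j)

lemma box_cover (n : ℕ) : {p : Rn n × ℝ | 0 < p.2} ⊆ ⋃ j, ⋃ m, box n j m := by
  rintro ⟨y, t⟩ ht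
  have ht : 0 < t := ht
  obtain ⟨j, hj⟩ := exists_mem_Ioc_zpow ht (by norm_num : (1 : ℝ) < 2)
  rw [mem_iUnion]
  refine ⟨j + 1, ?_⟩
  rw [mem_iUnion]
  have h2 : (0 : ℝ) < 2 ^ (j + 1) := by positivity
  refine ⟨fun i => ⌊y i / 2 ^ (j + 1)⌋, ?_, ?_, hj.2⟩
  · rw [mem_closedBall, EuclideanSpace.dist_eq]
    refine Real.sqrt_le_iff.2 ⟨by positivity, ?_⟩
    calc _ ≤ ∑ i : Fin n, ((2 : ℝ) ^ (j + 1)) ^ 2 := by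
          refine Finset.sum_le_sum (fun i _ => ?_)
          have e : ypt n (j + 1) (fun i => ⌊y i / 2 ^ (j + 1)⌋) i =
            2 ^ (j + 1) * (⌊y i / 2 ^ (j + 1)⌋ : ℝ) := rfl
          gcongr
          rw [Real.dist_eq, e]
          have h3 := Int.floor_le (y i / 2 ^ (j + 1))
          have h4 := Int.lt_floor_add_one (y i / 2 ^ (j + 1))
          rw [le_div_iff₀ h2] at h3
          rw [div_lt_iff₀ h2] at h4
          rw [abs_le]
          constructor <;> nlinarith
      _ = (n : ℝ) * ((2 : ℝ) ^ (j + 1)) ^ 2 := by simp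
      _ ≤ _ := by
        rw [mul_pow]
        gcongr
        exact_mod_cast Nat.le_self_pow two_ne_zero n
  · have := hj.1
    rw [zpow_add_one₀ (by norm_num)]
    simp only
    linarith

lemma box_volume {n : ℕ} (hn : 0 < n) (j : ℤ) (m : Fin n → ℤ) :
    volume (box n j m) = ENNReal.ofReal (cn n * (n * (2 : ℝ) ^ j) ^ n * ((2 : ℝ) ^ j / 2)) := by
  have hc := cn_pos n
  rw [box, Measure.volume_eq_prod, Measure.prod_prod, vol_closedBall hn _ _ (by positivity),
    Real.volume_Icc, ← ENNReal.ofReal_mul (by positivity)]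
  congr 2
  ring

/-- Domination of `g^*` by a discrete square function.  Only an upper bound for the Bochner integral
defining `g^*` is needed, so neither measurability nor integrability of its integrand matters. -/
lemma discretize {n : ℕ} (hn : 0 < n) {α lam : ℝ} (hα : 0 < α) (hα1 : α ≤ 1)
    (hlam : (3 * n + 2 * α) / n < lam) : ∃ C : ℝ≥0, ∀ f : Rn n → ℝ, LocallyIntegrable f →
      ∃ ψ : ℤ → (Fin n → ℤ) → Rn n → ℝ, (∀ j m, IsTest α (Tj n j) (ypt n j m) (ψ j m)) ∧
        ∀ x, ENNReal.ofReal (gstarAlpha α lam f x) ^ 2 ≤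
          C * ∑' j, ∑' m, ENNReal.ofReal (vw α j m x) ^ 2 * ‖∫ z, f z * ψ j m z‖ₑ ^ 2 := by
  have hc := cn_pos n
  have hn' : (0 : ℝ) < n := by exact_mod_cast hn
  have hlam' : 2 * ((n : ℝ) + α) ≤ lam * n := by
    rw [div_lt_iff₀ hn'] at hlam; linarith
  set K : ℝ := (2 * ((n : ℝ) + 1)) ^ n * (2 * ((n : ℝ) + 1)) ^ α * 2 with hK
  have hK0 : 0 < K := by positivity
  set L : ℝ := (2 : ℝ) ^ (2 * ((n : ℝ) + α)) * K ^ 2 * (cn n * (2 * n) ^ n) with hL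
  refine ⟨L.toNNReal, fun f hf => ?_⟩
  choose φ hφ hmax using fun (j : ℤ) (m : Fin n → ℤ) =>
    exists_almost_max hn hα1 hf (ypt n j m) (Tj_pos n j)
  refine ⟨fun j m z => (Tj n j ^ n)⁻¹ * φ j m ((Tj n j)⁻¹ • (ypt n j m - z)),
    fun j m => Calpha_isTest hn hα1 (hφ j m) (Tj_pos n j) _, fun x => ?_⟩
  set F : Rn n × ℝ → ℝ := fun p =>
    (p.2 / (p.2 + dist x p.1)) ^ (lam * n) * Aalpha α f p.1 p.2 ^ 2 / p.2 ^ (n + 1) with hF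
  set u : ℤ → (Fin n → ℤ) → ℝ := fun j m => pair f (φ j m) (ypt n j m) (Tj n j) with hu
  have hbox : ∀ j m, ∀ p ∈ box n j m, |F p| ≤ (2 : ℝ) ^ (2 * ((n : ℝ) + α)) * vw α j m x ^ 2 *
      (K * |u j m|) ^ 2 / ((2 : ℝ) ^ j / 2) ^ (n + 1) := by
    rintro j m ⟨y, t⟩ ⟨hy, ht1, ht2⟩
    simp only [mem_closedBall] at hy ht1 ht2
    have h2j : (0 : ℝ) < 2 ^ j := by positivity
    have ht : 0 < t := by linarith
    have hT := Tj_pos n j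
    have hTe : Tj n j = n * 2 ^ j + 2 ^ j := by unfold Tj; ring
    have htT : t + dist y (ypt n j m) ≤ Tj n j := by rw [hTe]; linarith
    have hd0 := dist_nonneg (x := y) (y := ypt n j m)
    have hA0 : 0 ≤ Aalpha α f y t :=
      Real.iSup_nonneg fun _ => Real.iSup_nonneg fun _ => abs_nonneg _
    have hA : Aalpha α f y t ≤ K * |u j m| := by
      refine Real.iSup_le (fun φ' => Real.iSup_le (fun hφ' => ?_) (by positivity)) (by positivity)
      obtain ⟨φ₁, hφ₁, e⟩ := pair_rescale f hφ' ht htT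
      have e' : ∫ z, (t ^ n)⁻¹ * φ' (t⁻¹ • (y - z)) * f z = pair f φ' y t := rfl
      rw [e', e, abs_mul, abs_of_nonneg (by positivity)]
      have hTt : Tj n j / t ≤ 2 * ((n : ℝ) + 1) := by
        rw [div_le_iff₀ ht, hTe]; nlinarith
      calc _ ≤ (2 * ((n : ℝ) + 1)) ^ n * (2 * ((n : ℝ) + 1)) ^ α * (2 * |u j m|) := by
            gcongr
            exact hmax j m φ₁ hφ₁
        _ = _ := by rw [hK]; ring
    have hb0 := kernel_base_nonneg ht x y
    have hw : (t / (t + dist x y)) ^ (lam * n) ≤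
        (2 : ℝ) ^ (2 * ((n : ℝ) + α)) * vw α j m x ^ 2 := by
      have hb : t / (t + dist x y) ≤ 2 * (Tj n j / (Tj n j + dist x (ypt n j m))) := by
        have h1 := dist_triangle x y (ypt n j m)
        have h3 := dist_nonneg (x := x) (y := y)
        have h4 := dist_nonneg (x := x) (y := ypt n j m)
        rw [← mul_div_assoc, div_le_div_iff₀ (by linarith) (by linarith)]
        nlinarith
      have hb1 := kernel_base_nonneg hT x (ypt n j m)
      calc _ ≤ (t / (t + dist x y)) ^ (2 * ((n : ℝ) + α)) := by
            have hpos : 0 < t / (t + dist x y) := by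
              have h3 := dist_nonneg (x := x) (y := y); positivity
            exact Real.rpow_le_rpow_of_exponent_ge hpos (kernel_base_le_one ht x y) hlam'
        _ ≤ (2 * (Tj n j / (Tj n j + dist x (ypt n j m)))) ^ (2 * ((n : ℝ) + α)) := by
            gcongr
        _ = _ := by
            rw [Real.mul_rpow (by norm_num) hb1, vw, mul_comm 2 ((n : ℝ) + α), Real.rpow_mul hb1]
            norm_num
    simp only [hF]
    rw [abs_of_nonneg (by positivity)]
    gcongr
  have hbound : ∀ j m, ∫⁻ p in box n j m, ‖F p‖ₑ ≤
      ENNReal.ofReal L * (ENNReal.ofReal (vw α j m x) ^ 2 * ‖u j m‖ₑ ^ 2) := by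
    intro j m
    have h2j : (0 : ℝ) < 2 ^ j := by positivity
    have hv := vw_nonneg α j m x
    calc _ ≤ ∫⁻ p in box n j m, ENNReal.ofReal ((2 : ℝ) ^ (2 * ((n : ℝ) + α)) * vw α j m x ^ 2 *
      (K * |u j m|) ^ 2 / ((2 : ℝ) ^ j / 2) ^ (n + 1)) := by
          refine setLIntegral_mono' (measurableSet_closedBall.prod measurableSet_Icc) ?_
          intro p hp
          rw [Real.enorm_eq_ofReal_abs]
          exact ENNReal.ofReal_le_ofReal (hbox j m p hp)
      _ = _ := by
          rw [setLIntegral_const, box_volume hn, Real.enorm_eq_ofReal_abs,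
            ← ENNReal.ofReal_pow hv, ← ENNReal.ofReal_pow (abs_nonneg _),
            ← ENNReal.ofReal_mul (by positivity), ← ENNReal.ofReal_mul (by positivity),
            ← ENNReal.ofReal_mul (by positivity)]
          congr 1
          rw [hL, mul_pow K, mul_pow (n : ℝ), mul_pow 2 (n : ℝ), div_pow]
          field_simp
          ring
  have hX : gstarAlpha α lam f x = Real.sqrt (∫ p in {p : Rn n × ℝ | 0 < p.2}, F p) := rfl
  have hX0 : 0 ≤ ∫ p in {p : Rn n × ℝ | 0 < p.2}, F p := by
    refine setIntegral_nonneg (measurableSet_lt measurable_const measurable_snd) ?_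
    rintro ⟨y, t⟩ (ht : 0 < t)
    have hb0 := kernel_base_nonneg ht x y
    simp only [hF]
    positivity
  have hpair : ∀ j m, ∫ z, f z * ((Tj n j ^ n)⁻¹ * φ j m ((Tj n j)⁻¹ • (ypt n j m - z))) =
      u j m := fun j m => by
    simp only [hu, pair]
    congr 1
    ext z
    ring
  simp_rw [hpair]
  rw [← ENNReal.ofReal_pow (by rw [hX]; exact Real.sqrt_nonneg _), hX, Real.sq_sqrt hX0,
    ← Real.enorm_eq_ofReal hX0]
  calc _ ≤ ∫⁻ p in {p : Rn n × ℝ | 0 < p.2}, ‖F p‖ₑ := enorm_integral_le_lintegral_enorm _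
    _ ≤ ∫⁻ p in ⋃ j, ⋃ m, box n j m, ‖F p‖ₑ := lintegral_mono_set (box_cover n)
    _ ≤ ∑' j, ∫⁻ p in ⋃ m, box n j m, ‖F p‖ₑ := lintegral_iUnion_le _ _
    _ ≤ ∑' j, ∑' m, ∫⁻ p in box n j m, ‖F p‖ₑ :=
        ENNReal.tsum_le_tsum fun j => lintegral_iUnion_le _ _
    _ ≤ ∑' j, ∑' m, ENNReal.ofReal L * (ENNReal.ofReal (vw α j m x) ^ 2 * ‖u j m‖ₑ ^ 2) :=
        ENNReal.tsum_le_tsum fun j => ENNReal.tsum_le_tsum fun m => hbound j m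
    _ = _ := by
        simp_rw [ENNReal.tsum_mul_left]
        rfl

/-! ### The weak-type estimate on a ball -/

/-- Summation and integration: the inequality that needs no measurability. -/
lemma tsum_lintegral_le {β ι : Type*} [MeasurableSpace β] (μ : Measure β) (F : ι → β → ℝ≥0∞) :
    ∑' i, ∫⁻ z, F i z ∂μ ≤ ∫⁻ z, ∑' i, F i z ∂μ := by
  classical
  rw [ENNReal.tsum_eq_iSup_sum]
  refine iSup_le fun S => ?_
  refine le_trans ?_ (lintegral_mono fun z => ENNReal.sum_le_tsum S)
  induction S using Finset.induction_on with
  | empty => simp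
  | insert a S ha ih =>
    simp_rw [Finset.sum_insert ha]
    exact (add_le_add le_rfl ih).trans (le_lintegral_add _ _)

lemma tsum_sq_le {ι κ : Type*} (a : ι → κ → ℝ≥0∞) :
    ∑' i, ∑' k, a i k ^ 2 ≤ (∑' i, ∑' k, a i k) ^ 2 := by
  set S := ∑' i, ∑' k, a i k with hS
  have h : ∀ i k, a i k ≤ S := fun i k =>
    (ENNReal.le_tsum k).trans (ENNReal.le_tsum (f := fun i => ∑' k, a i k) i)
  calc _ ≤ ∑' i, ∑' k, a i k * S := by
        refine ENNReal.tsum_le_tsum fun i => ENNReal.tsum_le_tsum fun k => ?_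
        rw [sq]
        gcongr
        exact h i k
    _ = _ := by simp_rw [ENNReal.tsum_mul_right]; rw [sq]

/-- Splitting of a test-function coefficient into good, bad and far parts. -/
lemma coeff_le {n : ℕ} {α T : ℝ} (hα : 0 < α) {y : Rn n} {ψ f g : Rn n → ℝ}
    (hψ : IsTest α T y ψ) (hf : LocallyIntegrable f) {Ω B : Set (Rn n)} (hB : MeasurableSet B)
    {ρ : Rn n → ℝ}
    (hcz : ‖(∫ z, B.indicator f z * ψ z) - ∫ z, g z * ψ z‖ₑ ≤
      ∫⁻ z in Ω, ‖B.indicator f z‖ₑ * ‖ψ z - avg ψ z (ρ z)‖ₑ) :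
    ‖∫ z, f z * ψ z‖ₑ ≤ ‖∫ z, g z * ψ z‖ₑ +
      ((∫⁻ z in Ω, ‖B.indicator f z‖ₑ * ‖ψ z - avg ψ z (ρ z)‖ₑ) +
        ∫⁻ z in Bᶜ, ‖f z‖ₑ * ‖ψ z‖ₑ) := by
  have hi : Integrable (fun z => f z * ψ z) :=
    hf.integrable_smul_right_of_hasCompactSupport (hψ.continuous hα) hψ.hasCompactSupport
  have e : ∫ z, f z * ψ z = (∫ z, g z * ψ z) +
      (((∫ z, B.indicator f z * ψ z) - ∫ z, g z * ψ z) + ∫ z in Bᶜ, f z * ψ z) := by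
    have e1 : ∫ z, B.indicator f z * ψ z = ∫ z in B, f z * ψ z := by
      rw [← integral_indicator hB]
      simp_rw [indicator_mul_left]
    rw [← integral_add_compl hB hi, e1]
    ring
  rw [e]
  refine (enorm_add_le _ _).trans (add_le_add le_rfl ((enorm_add_le _ _).trans
    (add_le_add hcz ((enorm_integral_le_lintegral_enorm _).trans (le_of_eq ?_)))))
  simp_rw [enorm_mul]

/-- The local estimate: on `B(x₀, r)` the square function is controlled in weak `L¹` by the mass of
`f` on the double ball and a Poisson-type tail. -/
lemma weak_local {n : ℕ} (hn : 0 < n) {α lam : ℝ} (hα : 0 < α) (hα1 : α ≤ 1)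
    (hlam : (3 * n + 2 * α) / n < lam) : ∃ C : ℝ≥0, ∀ f : Rn n → ℝ, LocallyIntegrable f →
      ∀ (x₀ : Rn n) (r : ℝ), 0 < r → ∀ σ : ℝ, 0 < σ →
        ENNReal.ofReal σ * volume {x ∈ ball x₀ r | σ < gstarAlpha α lam f x} ≤
          C * ((∫⁻ z in ball x₀ (2 * r), ‖f z‖ₑ) +
            ∫⁻ z in (ball x₀ (2 * r))ᶜ, ‖f z‖ₑ * ENNReal.ofReal ((r / dist z x₀) ^ n)) := by
  obtain ⟨C₀, hC₀⟩ := discretize hn hα hα1 hlam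
  obtain ⟨C₁, hC₁⟩ := cz hn
  obtain ⟨C₂, hC₂⟩ := bessel hn hα
  obtain ⟨C₃, hC₃⟩ := vw_int n hα
  obtain ⟨C₄, hC₄⟩ := bad_sum hn hα
  obtain ⟨C₅, hC₅⟩ := tail_sum hn hα hα1
  set K : ℝ≥0 := 4 * C₀ + 1 with hK
  refine ⟨C₁ + K * C₃ * C₂ * C₁ + K * (C₄ + C₅), fun f hf x₀ r hr σ hσ => ?_⟩
  obtain ⟨ψ, hψ, hG⟩ := hC₀ f hf
  set B := ball x₀ (2 * r) with hB
  have hBm : MeasurableSet B := measurableSet_ball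
  set f₁ := B.indicator f with hf₁
  have hf₁i : Integrable f₁ := by
    refine IntegrableOn.integrable_indicator ?_ hBm
    exact (hf.integrableOn_isCompact (isCompact_closedBall x₀ (2 * r))).mono_set
      ball_subset_closedBall
  obtain ⟨Ω, ρ, g, hΩ, hvol, hρ0, hρ, hg, hg2, hgb, hcz⟩ := hC₁ f₁ hf₁i σ hσ
  set I := ∫⁻ u, ‖f₁ u‖ₑ with hI
  have hIe : I = ∫⁻ z in B, ‖f z‖ₑ := by
    rw [hI, ← lintegral_indicator hBm]
    simp_rw [hf₁, enorm_indicator_eq_indicator_enorm]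
  set J := ∫⁻ z in Bᶜ, ‖f z‖ₑ * ENNReal.ofReal ((r / dist z x₀) ^ n) with hJ
  rw [← hIe]
  set s := ENNReal.ofReal σ with hs
  have hs0 : s ≠ 0 := by simp [hs, hσ]
  have hst : s ≠ ∞ := ENNReal.ofReal_ne_top
  set v : ℤ → (Fin n → ℤ) → Rn n → ℝ≥0∞ := fun j m x => ENNReal.ofReal (vw α j m x) with hv
  have hvm : ∀ j m, Measurable (v j m) := fun j m =>
    ENNReal.measurable_ofReal.comp (vw_continuous hα j m).measurable
  have hv1 : ∀ j m x, v j m x ^ 2 ≤ v j m x := fun j m x => by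
    have h1 : v j m x ≤ 1 := ENNReal.ofReal_le_one.2 (vw_le_one hα j m x)
    calc v j m x ^ 2 = v j m x * v j m x := sq _
      _ ≤ v j m x * 1 := by gcongr
      _ = _ := mul_one _
  set q : ℤ → (Fin n → ℤ) → ℝ≥0∞ := fun j m => ‖∫ z, g z * ψ j m z‖ₑ with hq
  set b : ℤ → (Fin n → ℤ) → ℝ≥0∞ := fun j m =>
    ∫⁻ z in Ω, ‖f₁ z‖ₑ * ‖ψ j m z - avg (ψ j m) z (ρ z)‖ₑ with hb
  set c : ℤ → (Fin n → ℤ) → ℝ≥0∞ := fun j m => ∫⁻ z in Bᶜ, ‖f z‖ₑ * ‖ψ j m z‖ₑ with hc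
  have hu : ∀ j m, ‖∫ z, f z * ψ j m z‖ₑ ≤ q j m + (b j m + c j m) := fun j m =>
    coeff_le hα (hψ j m) hf hBm
      (hcz _ ((hψ j m).continuous hα) (hψ j m).hasCompactSupport)
  set P : Rn n → ℝ≥0∞ := fun x => ∑' j, ∑' m, v j m x ^ 2 * q j m ^ 2 with hP
  set Q : Rn n → ℝ≥0∞ := fun x => ∑' j, ∑' m, v j m x * (b j m + c j m) with hQ
  have hPm : Measurable P := Measurable.tsum fun j => Measurable.tsum fun m =>
    ((hvm j m).pow_const 2).mul_const _
  have hQm : Measurable Q := Measurable.tsum fun j => Measurable.tsum fun m =>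
    (hvm j m).mul_const _
  have hsplit : ∀ x, ENNReal.ofReal (gstarAlpha α lam f x) ^ 2 ≤ C₀ * (2 * P x + 2 * Q x ^ 2) := by
    intro x
    refine (hG x).trans ?_
    gcongr
    calc _ ≤ ∑' j, ∑' m, (2 * (v j m x ^ 2 * q j m ^ 2) +
          2 * (v j m x * (b j m + c j m)) ^ 2) := by
          refine ENNReal.tsum_le_tsum fun j => ENNReal.tsum_le_tsum fun m => ?_
          calc _ ≤ v j m x ^ 2 * (q j m + (b j m + c j m)) ^ 2 := by gcongr; exact hu j m
            _ ≤ v j m x ^ 2 * (2 * (q j m ^ 2 + (b j m + c j m) ^ 2)) := by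
                gcongr
                have := ENNReal.rpow_add_le_mul_rpow_add_rpow (q j m) (b j m + c j m) one_le_two
                norm_num at this
                exact this
            _ = _ := by rw [mul_pow]; ring
      _ = 2 * P x + 2 * ∑' j, ∑' m, (v j m x * (b j m + c j m)) ^ 2 := by
          simp_rw [ENNReal.tsum_add, ENNReal.tsum_mul_left]
          rfl
      _ ≤ _ := by gcongr; exact tsum_sq_le _
  have hcover : {x ∈ ball x₀ r | σ < gstarAlpha α lam f x} ⊆
      Ω ∪ ({x | s ^ 2 ≤ K * P x} ∪ ({x | s ≤ K * Q x} ∩ (ball x₀ r \ Ω))) := by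
    rintro x ⟨hx, hxσ⟩
    by_cases hxΩ : x ∈ Ω
    · exact Or.inl hxΩ
    refine Or.inr ?_
    by_contra! h
    simp only [mem_union, mem_inter_iff, mem_ofPred_eq, mem_sdiff, hx, hxΩ, not_or, not_le,
      not_false_eq_true, and_true] at h
    obtain ⟨h1, h2⟩ := h
    have h3 : s ^ 2 < ENNReal.ofReal (gstarAlpha α lam f x) ^ 2 := by
      gcongr
      exact (ENNReal.ofReal_lt_ofReal_iff (hσ.trans hxσ)).2 hxσ
    have h4 : (K : ℝ≥0∞) * Q x ^ 2 ≤ s ^ 2 := by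
      calc (K : ℝ≥0∞) * Q x ^ 2 ≤ K * K * Q x ^ 2 := by
            gcongr
            refine le_mul_of_one_le_left' ?_
            rw [hK]; push_cast; exact le_add_self
        _ = (K * Q x) ^ 2 := by ring
        _ ≤ _ := by gcongr
    have hKC : (4 * C₀ : ℝ≥0∞) ≤ K := by rw [hK]; push_cast; exact le_self_add
    have h5 : 2 * ENNReal.ofReal (gstarAlpha α lam f x) ^ 2 ≤ 2 * s ^ 2 := by
      calc _ ≤ 2 * (C₀ * (2 * P x + 2 * Q x ^ 2)) := by gcongr; exact hsplit x
        _ = 4 * C₀ * P x + 4 * C₀ * Q x ^ 2 := by ring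
        _ ≤ K * P x + K * Q x ^ 2 := by gcongr
        _ ≤ s ^ 2 + s ^ 2 := add_le_add h1.le h4
        _ = _ := (two_mul _).symm
    exact (ENNReal.mul_le_mul_iff_right two_ne_zero ENNReal.ofNat_ne_top).1 h5 |>.not_gt h3
  -- good part: Chebyshev in `L²` and the Bessel inequality
  have hgood : s * volume {x | s ^ 2 ≤ K * P x} ≤ K * C₃ * C₂ * C₁ * I := by
    have h1 : s ^ 2 * volume {x | s ^ 2 ≤ K * P x} ≤ ∫⁻ x, K * P x :=
      mul_meas_ge_le_lintegral (hPm.const_mul _) _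
    have h2 : ∫⁻ x, P x ≤ ∑' j, ∑' m, C₃ * (ENNReal.ofReal (Tj n j ^ n) * q j m ^ 2) := by
      simp only [hP]
      rw [lintegral_tsum fun j => (Measurable.tsum fun m =>
        ((hvm j m).pow_const 2).mul_const _).aemeasurable]
      refine ENNReal.tsum_le_tsum fun j => ?_
      rw [lintegral_tsum fun m => (((hvm j m).pow_const 2).mul_const _).aemeasurable]
      refine ENNReal.tsum_le_tsum fun m => ?_
      rw [lintegral_mul_const _ ((hvm j m).pow_const 2), ← mul_assoc]
      gcongr
      exact (lintegral_mono (hv1 j m)).trans (hC₃ j m)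
    have h3 : s * (s * volume {x | s ^ 2 ≤ K * P x}) ≤ s * (K * C₃ * C₂ * C₁ * I) := by
      calc _ = s ^ 2 * volume {x | s ^ 2 ≤ K * P x} := by ring
        _ ≤ K * ∫⁻ x, P x := by rwa [← lintegral_const_mul _ hPm]
        _ ≤ K * (C₃ * (C₂ * (C₁ * s * I))) := by
            gcongr
            refine h2.trans ?_
            simp_rw [ENNReal.tsum_mul_left (a := (C₃ : ℝ≥0∞))]
            gcongr
            refine (hC₂ ψ hψ g hg hg2).trans ?_
            gcongr
        _ = _ := by ring
    exact (ENNReal.mul_le_mul_iff_right hs0 hst).1 h3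
  -- bad and far parts: Chebyshev in `L¹` off `Ω`
  have hbad : s * volume ({x | s ≤ K * Q x} ∩ (ball x₀ r \ Ω)) ≤ K * (C₄ * I + C₅ * J) := by
    set D := ball x₀ r \ Ω with hD
    have h1 : s * volume ({x | s ≤ K * Q x} ∩ D) ≤ ∫⁻ x in D, K * Q x :=
      (mul_le_mul_right (Measure.le_restrict_apply _ _) s).trans
        (mul_meas_ge_le_lintegral (hQm.const_mul _) _)
    refine h1.trans ?_
    rw [lintegral_const_mul _ hQm]
    gcongr
    have h2 : ∫⁻ x in D, Q x = (∑' j, ∑' m, b j m * ∫⁻ x in D, v j m x) +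
        ∑' j, ∑' m, c j m * ∫⁻ x in D, v j m x := by
      simp only [hQ]
      rw [lintegral_tsum fun j => (Measurable.tsum fun m =>
        (hvm j m).mul_const _).aemeasurable, ← ENNReal.tsum_add]
      refine tsum_congr fun j => ?_
      rw [lintegral_tsum fun m => ((hvm j m).mul_const _).aemeasurable, ← ENNReal.tsum_add]
      refine tsum_congr fun m => ?_
      rw [lintegral_mul_const _ (hvm j m)]
      ring
    rw [h2]
    refine add_le_add ?_ ?_
    · calc _ ≤ ∑' j, ∑' m, ∫⁻ z in Ω, ‖f₁ z‖ₑ * (‖ψ j m z - avg (ψ j m) z (ρ z)‖ₑ *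
            ∫⁻ x in D, v j m x) := by
            refine ENNReal.tsum_le_tsum fun j => ENNReal.tsum_le_tsum fun m => ?_
            refine (lintegral_mul_const_le _ _).trans (le_of_eq ?_)
            simp_rw [mul_assoc]
        _ ≤ ∑' j, ∫⁻ z in Ω, ∑' m, ‖f₁ z‖ₑ * (‖ψ j m z - avg (ψ j m) z (ρ z)‖ₑ *
            ∫⁻ x in D, v j m x) := ENNReal.tsum_le_tsum fun j => tsum_lintegral_le _ _
        _ ≤ ∫⁻ z in Ω, ∑' j, ∑' m, ‖f₁ z‖ₑ * (‖ψ j m z - avg (ψ j m) z (ρ z)‖ₑ *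
            ∫⁻ x in D, v j m x) := tsum_lintegral_le _ _
        _ ≤ ∫⁻ z in Ω, C₄ * ‖f₁ z‖ₑ := by
            refine setLIntegral_mono' hΩ fun z hz => ?_
            simp_rw [ENNReal.tsum_mul_left]
            rw [mul_comm]
            gcongr
            refine le_trans ?_ (hC₄ ψ hψ z (ρ z) (hρ0 z hz))
            gcongr with j m
            exact fun x hx => hρ z hz x hx.2
        _ ≤ C₄ * I := by
            rw [lintegral_const_mul' _ _ ENNReal.coe_ne_top]
            gcongr
            exact setLIntegral_le_lintegral _ _
    · calc _ ≤ ∑' j, ∑' m, ∫⁻ z in Bᶜ, ‖f z‖ₑ * (‖ψ j m z‖ₑ * ∫⁻ x in D, v j m x) := by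
            refine ENNReal.tsum_le_tsum fun j => ENNReal.tsum_le_tsum fun m => ?_
            refine (lintegral_mul_const_le _ _).trans (le_of_eq ?_)
            simp_rw [mul_assoc]
        _ ≤ ∑' j, ∫⁻ z in Bᶜ, ∑' m, ‖f z‖ₑ * (‖ψ j m z‖ₑ * ∫⁻ x in D, v j m x) :=
            ENNReal.tsum_le_tsum fun j => tsum_lintegral_le _ _
        _ ≤ ∫⁻ z in Bᶜ, ∑' j, ∑' m, ‖f z‖ₑ * (‖ψ j m z‖ₑ * ∫⁻ x in D, v j m x) :=
            tsum_lintegral_le _ _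
        _ ≤ ∫⁻ z in Bᶜ, C₅ * (‖f z‖ₑ * ENNReal.ofReal ((r / dist z x₀) ^ n)) := by
            refine setLIntegral_mono' hBm.compl fun z hz => ?_
            simp_rw [ENNReal.tsum_mul_left]
            rw [mul_left_comm]
            gcongr
            have hz' : 2 * r ≤ dist z x₀ := not_lt.1 hz
            refine le_trans ?_ (hC₅ ψ hψ x₀ z r hr hz')
            gcongr with j m
            exact sdiff_subset
        _ ≤ C₅ * J := by rw [lintegral_const_mul' _ _ ENNReal.coe_ne_top]
  calc _ ≤ s * (volume Ω + (volume {x | s ^ 2 ≤ K * P x} +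
        volume ({x | s ≤ K * Q x} ∩ (ball x₀ r \ Ω)))) := by
        gcongr
        exact (measure_mono hcover).trans ((measure_union_le _ _).trans
          (add_le_add le_rfl (measure_union_le _ _)))
    _ = s * volume Ω + (s * volume {x | s ^ 2 ≤ K * P x} +
        s * volume ({x | s ≤ K * Q x} ∩ (ball x₀ r \ Ω))) := by ring
    _ ≤ C₁ * I + (K * C₃ * C₂ * C₁ * I + K * (C₄ * I + C₅ * J)) := by gcongr
    _ = C₁ * I + K * C₃ * C₂ * C₁ * I + K * (C₄ * I + C₅ * J) := by ring
    _ ≤ C₁ * (I + J) + K * C₃ * C₂ * C₁ * (I + J) + K * (C₄ * (I + J) + C₅ * (I + J)) := by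
        gcongr <;> first | exact le_self_add | exact le_add_self
    _ = _ := by push_cast; ring

/-! ### Morrey spaces -/

lemma MorreyBound.lintegral_le {n : ℕ} {Φ : ℝ → ℝ} {f : Rn n → ℝ} {A : ℝ}
    (hf : LocallyIntegrable f) (h : MorreyBound 1 Φ f A) (x₀ : Rn n) {r : ℝ} (hr : 0 < r) :
    ∫⁻ z in ball x₀ r, ‖f z‖ₑ ≤ ENNReal.ofReal (A * Φ r) := by
  have hi : IntegrableOn f (ball x₀ r) :=
    (hf.integrableOn_isCompact (isCompact_closedBall x₀ r)).mono_set ball_subset_closedBall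
  have h1 := h x₀ r hr
  simp only [Real.rpow_one] at h1
  calc _ = ENNReal.ofReal (∫ z in ball x₀ r, |f z|) := by
        rw [ofReal_integral_eq_lintegral_ofReal hi.abs (ae_of_all _ fun _ => abs_nonneg _)]
        simp_rw [Real.enorm_eq_ofReal_abs]
    _ ≤ _ := ENNReal.ofReal_le_ofReal h1

/-- The Poisson-type tail of a Morrey function: the annuli contribute a geometric series of ratio
`D / 2ⁿ`. -/
lemma morrey_tail {n : ℕ} {D : ℝ} (hD1 : 1 ≤ D) (hD2 : D < 2 ^ n) {Φ : ℝ → ℝ}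
    (hdoub : ∀ r : ℝ, 0 < r → Φ (2 * r) ≤ D * Φ r) : ∃ C : ℝ≥0, ∀ f : Rn n → ℝ,
      LocallyIntegrable f → ∀ A : ℝ, 0 ≤ A → MorreyBound 1 Φ f A → ∀ (x₀ : Rn n) (r : ℝ), 0 < r →
        0 ≤ Φ r →
        ∫⁻ z in (ball x₀ (2 * r))ᶜ, ‖f z‖ₑ * ENNReal.ofReal ((r / dist z x₀) ^ n) ≤
          C * ENNReal.ofReal (A * Φ r) := by
  have hD0 : 0 < D := by linarith
  have hq1 : D / 2 ^ n < 1 := (div_lt_one (by positivity)).2 hD2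
  have hsum : Summable fun k : ℕ => D ^ 2 * (D / 2 ^ n) ^ k :=
    (summable_geometric_of_lt_one (by positivity) hq1).mul_left _
  refine ⟨(∑' k : ℕ, D ^ 2 * (D / 2 ^ n) ^ k).toNNReal, fun f hf A hA hM x₀ r hr hΦ => ?_⟩
  have hΦk : ∀ k : ℕ, Φ (2 ^ k * r) ≤ D ^ k * Φ r := by
    intro k
    induction k with
    | zero => simp
    | succ k ih =>
      calc Φ (2 ^ (k + 1) * r) = Φ (2 * (2 ^ k * r)) := by ring_nf
        _ ≤ D * Φ (2 ^ k * r) := hdoub _ (by positivity)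
        _ ≤ D * (D ^ k * Φ r) := by gcongr
        _ = _ := by ring
  set E : ℕ → Set (Rn n) := fun k => ball x₀ (2 ^ (k + 2) * r) \ ball x₀ (2 ^ (k + 1) * r) with hE
  have hcov : (ball x₀ (2 * r))ᶜ ⊆ ⋃ k, E k := by
    intro z hz
    have hz' : 2 * r ≤ dist z x₀ := not_lt.1 hz
    obtain ⟨k, hk1, hk2⟩ := exists_nat_pow_near (x := dist z x₀ / (2 * r)) (y := 2)
      ((one_le_div (by positivity)).2 hz') one_lt_two
    rw [le_div_iff₀ (by positivity)] at hk1
    rw [div_lt_iff₀ (by positivity)] at hk2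
    rw [mem_iUnion]
    refine ⟨k, ?_, ?_⟩
    · rw [mem_ball]
      calc dist z x₀ < 2 ^ (k + 1) * (2 * r) := hk2
        _ = _ := by ring
    · rw [mem_ball, not_lt]
      calc 2 ^ (k + 1) * r = 2 ^ k * (2 * r) := by ring
        _ ≤ _ := hk1
  have hEk : ∀ k, ∫⁻ z in E k, ‖f z‖ₑ * ENNReal.ofReal ((r / dist z x₀) ^ n) ≤
      ENNReal.ofReal (D ^ 2 * (D / 2 ^ n) ^ k) * ENNReal.ofReal (A * Φ r) := by
    intro k
    calc _ ≤ ∫⁻ z in E k, ENNReal.ofReal (((2 : ℝ) ^ k)⁻¹ ^ n) * ‖f z‖ₑ := by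
          refine setLIntegral_mono' (measurableSet_ball.diff measurableSet_ball) ?_
          rintro z ⟨-, hz⟩
          have hz' : 2 ^ (k + 1) * r ≤ dist z x₀ := not_lt.1 hz
          have hd : 0 < dist z x₀ := lt_of_lt_of_le (by positivity) hz'
          rw [mul_comm]
          gcongr
          rw [div_le_iff₀ hd, inv_mul_eq_div, le_div_iff₀ (by positivity)]
          rw [pow_succ] at hz'
          have : 0 < r * 2 ^ k := by positivity
          linarith
      _ ≤ ENNReal.ofReal (((2 : ℝ) ^ k)⁻¹ ^ n) * ∫⁻ z in ball x₀ (2 ^ (k + 2) * r), ‖f z‖ₑ := by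
          rw [lintegral_const_mul' _ _ ENNReal.ofReal_ne_top]
          gcongr
          exact sdiff_subset
      _ ≤ ENNReal.ofReal (((2 : ℝ) ^ k)⁻¹ ^ n) * ENNReal.ofReal (A * (D ^ (k + 2) * Φ r)) := by
          gcongr
          refine (hM.lintegral_le hf x₀ (by positivity)).trans ?_
          apply ENNReal.ofReal_le_ofReal
          gcongr
          exact hΦk _
      _ = _ := by
          rw [← ENNReal.ofReal_mul (by positivity), ← ENNReal.ofReal_mul (by positivity)]
          congr 1
          rw [div_pow, ← pow_mul, mul_comm n k, inv_pow, ← pow_mul, pow_add]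
          field_simp
  calc _ ≤ ∫⁻ z in ⋃ k, E k, ‖f z‖ₑ * ENNReal.ofReal ((r / dist z x₀) ^ n) :=
        lintegral_mono_set hcov
    _ ≤ ∑' k, ∫⁻ z in E k, ‖f z‖ₑ * ENNReal.ofReal ((r / dist z x₀) ^ n) :=
        lintegral_iUnion_le _ _
    _ ≤ ∑' k, ENNReal.ofReal (D ^ 2 * (D / 2 ^ n) ^ k) * ENNReal.ofReal (A * Φ r) :=
        ENNReal.tsum_le_tsum hEk
    _ = _ := by
        rw [ENNReal.tsum_mul_right, ← ENNReal.ofReal_tsum_of_nonneg (fun k => by positivity) hsum]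
        rfl

/-! ### Conclusion -/

/-- **Theorem 1.5.** Let `0 < α ≤ 1`, `p = 1` and `λ > (3n + 2α)/n`.  If `Φ` is positive
increasing on `(0,∞)` and doubling with constant `1 ≤ D < 2ⁿ`, then `g^*_{λ,α}` is bounded
from `L^{1,Φ}(ℝⁿ)` to `WL^{1,Φ}(ℝⁿ)`. -/
theorem gstar_weak_morrey_bounded
    (n : ℕ) (hn : 0 < n) (α lam D : ℝ) (hα0 : 0 < α) (hα1 : α ≤ 1)
    (hlam : (3 * n + 2 * α) / n < lam)
    (Φ : ℝ → ℝ) (hΦpos : ∀ r : ℝ, 0 < r → 0 < Φ r)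
    (hΦmono : ∀ r s : ℝ, 0 < r → r ≤ s → Φ r ≤ Φ s)
    (hD1 : 1 ≤ D) (hD2 : D < 2 ^ n)
    (hΦdoub : ∀ r : ℝ, 0 < r → Φ (2 * r) ≤ D * Φ r) :
    ∃ C : ℝ, 0 < C ∧ ∀ f : Rn n → ℝ, LocallyIntegrable f volume →
      ∀ A : ℝ, 0 ≤ A → MorreyBound 1 Φ f A →
        WeakMorreyBound Φ (gstarAlpha α lam f) (C * A) := by
  obtain ⟨C₁, hC₁⟩ := weak_local hn hα0 hα1 hlam
  obtain ⟨C₂, hC₂⟩ := morrey_tail (Φ := Φ) hD1 hD2 hΦdoub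
  have hD0 : 0 < D := by linarith
  -- the summand `1` only makes the constant positive
  refine ⟨C₁ * (D + C₂) + 1, by positivity, fun f hf A hA hM x₀ r hr σ hσ => ?_⟩
  have hΦ := hΦpos r hr
  have h1 := hC₁ f hf x₀ r hr σ hσ
  have h2 : ∫⁻ z in ball x₀ (2 * r), ‖f z‖ₑ ≤ ENNReal.ofReal D * ENNReal.ofReal (A * Φ r) := by
    refine (hM.lintegral_le hf x₀ (by positivity)).trans ?_
    rw [← ENNReal.ofReal_mul hD0.le]
    apply ENNReal.ofReal_le_ofReal
    calc A * Φ (2 * r) ≤ A * (D * Φ r) := by gcongr; exact hΦdoub r hr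
      _ = _ := by ring
  have h3 := hC₂ f hf A hA hM x₀ r hr hΦ.le
  have h4 : ENNReal.ofReal σ * volume {x ∈ ball x₀ r | σ < gstarAlpha α lam f x} ≤
      ENNReal.ofReal (C₁ * (D + C₂) * (A * Φ r)) := by
    calc _ ≤ C₁ * (ENNReal.ofReal D * ENNReal.ofReal (A * Φ r) +
          C₂ * ENNReal.ofReal (A * Φ r)) := h1.trans (by gcongr)
      _ = _ := by
        generalize A * Φ r = M
        rw [ENNReal.ofReal_mul (by positivity), ENNReal.ofReal_mul C₁.coe_nonneg,
          ENNReal.ofReal_add hD0.le C₂.coe_nonneg, ENNReal.ofReal_coe_nnreal,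
          ENNReal.ofReal_coe_nnreal]
        ring
  have h5 := ENNReal.toReal_le_of_le_ofReal (by positivity) h4
  rw [ENNReal.toReal_mul, ENNReal.toReal_ofReal hσ.le] at h5
  refine h5.trans ?_
  have : 0 ≤ A * Φ r := by positivity
  nlinarith
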